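/- arXiv:1101.2833 — 3 statements merged into one kernel-verified Lean document; each statement's English description precedes it below -/
import Mathlib

section
/- Let n ≥ 2, let Ω ⊂ ℝⁿ be a domain (bounded connected open set), and let E ⊂ Ω be a smooth closed embedded submanifold of dimension k with 0 ≤ k ≤ n − 2. Assume u ∈ LSC(Ω ∖ E) satisfies inf_{Ω∖E} u > −∞ and λ₁(∇²u) + ⋯ + λ_{k+2}(∇²u) ≤ 0 in Ω ∖ E in the viscosity sense, where λ₁(M) ≤ ⋯ ≤ λₙ(M) denote the eigenvalues of a symmetric matrix M in non-decreasing order. Then, extending u to E by u(x) := liminf_{y → x, y ∈ Ω∖E} u(y), the extended function belongs to LSC(Ω) and is lowerconical on E. -/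
open Set Metric

noncomputable section

/-- ℝⁿ, realized as Euclidean space on `Fin n`. -/
abbrev En (n : ℕ) := EuclideanSpace ℝ (Fin n)

/-- The Hessian matrix `∇²φ(x)` of a real-valued function on ℝⁿ. -/
noncomputable def hess {n : ℕ} (φ : En n → ℝ) (x : En n) : Matrix (Fin n) (Fin n) ℝ :=
  Matrix.of fun i j =>
    iteratedFDeriv ℝ 2 φ x ![EuclideanSpace.single i 1, EuclideanSpace.single j 1]

/-- `u` satisfies `F(x, u, ∇u, ∇²u) ≤ f(x)` in the open set `O` in the viscosity sense:
for every test function `φ ∈ C²(O)` and every `x₀ ∈ O` at which `u - φ` attains a local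
minimum with `u x₀ = φ x₀`, one has `F(x₀, φ(x₀), ∇φ(x₀), ∇²φ(x₀)) ≤ f(x₀)`. -/
def IsViscositySupersolution {n : ℕ}
    (F : En n → ℝ → En n → Matrix (Fin n) (Fin n) ℝ → ℝ)
    (f : En n → ℝ) (O : Set (En n)) (u : En n → ℝ) : Prop :=
  ∀ φ : En n → ℝ, ContDiffOn ℝ 2 φ O → ∀ x₀ ∈ O, u x₀ = φ x₀ →
    IsLocalMinOn (fun x => u x - φ x) O x₀ →
    F x₀ (φ x₀) (gradient φ x₀) (hess φ x₀) ≤ f x₀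

/-- `E` is a smooth (C^∞) closed (compact, boundaryless) embedded `k`-dimensional
submanifold of ℝⁿ: `E` is compact and near each of its points there is a smooth chart
straightening `E` onto the coordinate subspace `{z : z_i = 0 for i ≥ k}`. -/
def IsSmoothClosedSubmanifold {n : ℕ} (k : ℕ) (E : Set (En n)) : Prop :=
  IsCompact E ∧
  ∀ x ∈ E, ∃ (U V : Set (En n)) (φ ψ : En n → En n),
    IsOpen U ∧ IsOpen V ∧ x ∈ U ∧
    ContDiffOn ℝ (⊤ : ℕ∞) φ U ∧ ContDiffOn ℝ (⊤ : ℕ∞) ψ V ∧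
    Set.MapsTo φ U V ∧ Set.MapsTo ψ V U ∧
    (∀ y ∈ U, ψ (φ y) = y) ∧ (∀ z ∈ V, φ (ψ z) = z) ∧
    φ '' (E ∩ U) = V ∩ {z : En n | ∀ i : Fin n, k ≤ (i : ℕ) → z i = 0}

/-- The eigenvalues of a symmetric matrix, listed in non-decreasing order
`λ₁(M) ≤ ⋯ ≤ λₙ(M)` (junk value `0` for non-symmetric matrices). -/
noncomputable def sortedEigs {n : ℕ} (M : Matrix (Fin n) (Fin n) ℝ) : Fin n → ℝ :=
  if h : M.IsHermitian then h.eigenvalues ∘ Tuple.sort h.eigenvalues else fun _ => 0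

/-- `λ₁(M) + ⋯ + λ_m(M)`, the sum of the `m` smallest eigenvalues of a symmetric matrix. -/
noncomputable def sumSmallestEigs {n : ℕ} (m : ℕ) (M : Matrix (Fin n) (Fin n) ℝ) : ℝ :=
  ∑ i : Fin n, if (i : ℕ) < m then sortedEigs M i else 0

open Classical in
/-- The extension of `u` from `Ω \ E` to `E` by `u(x) := liminf_{y → x, y ∈ Ω \ E} u(y)`,
with values in the extended reals. -/
noncomputable def liminfExtension {n : ℕ} (Ω E : Set (En n)) (u : En n → ℝ) :
    En n → EReal :=
  fun x => if x ∈ E then Filter.liminf (fun y => (u y : EReal)) (nhdsWithin x (Ω \ E))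
    else (u x : EReal)

/-- Lowerconical on `E`, for an extended-real-valued function `v`: for every
`η ∈ C^∞(Ω)`, every `xb ∈ E` and every `ε > 0`,
`inf_{x ∈ Ω} ((v+η)(x) - (v+η)(xb) - ε · dist(x, E)) < 0`. -/
def ERealLowerConicalOn {n : ℕ} (Ω : Set (En n)) (v : En n → EReal) (E : Set (En n)) : Prop :=
  ∀ η : En n → ℝ, ContDiffOn ℝ (⊤ : ℕ∞) η Ω → ∀ xb ∈ E, ∀ ε > 0,
    ∃ x ∈ Ω, v x + (η x : EReal) - (v xb + (η xb : EReal))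
      - ((ε * Metric.infDist x E : ℝ) : EReal) < 0

open Filter Topology

lemma sumSmallestEigs_eq {n m : ℕ} (hm : m ≤ n) {M : Matrix (Fin n) (Fin n) ℝ}
    (hM : M.IsHermitian) :
    ∃ v : Fin m → En n, Orthonormal ℝ v ∧
      sumSmallestEigs m M = ∑ i, ∑ a, ∑ b, (v i) a * (v i) b * M a b := by
  let σ := Tuple.sort hM.eigenvalues
  refine ⟨fun i => hM.eigenvectorBasis (σ (Fin.castLE hm i)), ?_, ?_⟩
  · exact hM.eigenvectorBasis.orthonormal.comp _
      (σ.injective.comp (Fin.castLE_injective hm))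
  · have h1 : ∀ j : Fin n, ∑ a, ∑ b, (hM.eigenvectorBasis j) a * (hM.eigenvectorBasis j) b * M a b
        = hM.eigenvalues j := by
      intro j
      have hv := hM.mulVec_eigenvectorBasis j
      have hn : ∑ a, (hM.eigenvectorBasis j) a * (hM.eigenvectorBasis j) a = 1 := by
        have := hM.eigenvectorBasis.orthonormal.1 j
        have h2 := EuclideanSpace.norm_sq_eq (hM.eigenvectorBasis j)
        rw [this] at h2
        simp only [Real.norm_eq_abs, sq_abs] at h2
        simp only [← sq]
        linarith
      have : ∀ a, ∑ b, (hM.eigenvectorBasis j) a * (hM.eigenvectorBasis j) b * M a b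
          = hM.eigenvalues j * ((hM.eigenvectorBasis j) a * (hM.eigenvectorBasis j) a) := by
        intro a
        have := congrFun hv a
        simp only [Matrix.mulVec, dotProduct, Pi.smul_apply, smul_eq_mul] at this
        calc _ = (hM.eigenvectorBasis j) a * ∑ b, M a b * (hM.eigenvectorBasis j) b := by
              rw [Finset.mul_sum]; exact Finset.sum_congr rfl fun b _ => by ring
          _ = _ := by rw [this]; ring
      simp only [this, ← Finset.mul_sum, hn, mul_one]
    simp only [h1]
    unfold sumSmallestEigs sortedEigs
    rw [dif_pos hM]
    simp only [Function.comp_apply]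
    rw [← Finset.sum_filter]
    symm
    refine Finset.sum_bij (fun i _ => Fin.castLE hm i) ?_ ?_ ?_ ?_
    · intro i _; simp
    · intro i _ j _ h; exact Fin.castLE_injective hm h
    · intro j hj
      simp only [Finset.mem_filter, Finset.mem_univ, true_and] at hj
      exact ⟨⟨j, hj⟩, Finset.mem_univ _, by ext; simp⟩
    · intro i _; rfl

lemma hess_quadratic {n : ℕ} (φ : En n → ℝ) (x v : En n) :
    ∑ a, ∑ b, v a * v b * hess φ x a b = fderiv ℝ (fderiv ℝ φ) x v v := by
  have hv : v = ∑ a, v a • (EuclideanSpace.single a (1:ℝ) : En n) := by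
    have := (EuclideanSpace.basisFun (Fin n) ℝ).sum_repr v
    simpa using this.symm
  conv_rhs => rw [hv]
  simp only [map_sum, map_smul, _root_.sum_apply, _root_.smul_apply,
    smul_eq_mul, Finset.mul_sum]
  rw [Finset.sum_comm]
  refine Finset.sum_congr rfl fun a _ => Finset.sum_congr rfl fun b _ => ?_
  simp only [hess, Matrix.of_apply, iteratedFDeriv_two_apply, Matrix.cons_val_zero,
    Matrix.cons_val_one]
  ring

lemma hess_isHermitian {n : ℕ} {φ : En n → ℝ} {x : En n} (h : ContDiffAt ℝ 2 φ x) :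
    (hess φ x).IsHermitian := by
  have := h.isSymmSndFDerivAt (by simp)
  ext i j
  simp only [hess, Matrix.conjTranspose_apply, Matrix.of_apply, iteratedFDeriv_two_apply,
    Matrix.cons_val_zero, Matrix.cons_val_one, star_trivial]
  exact this _ _

lemma visc_local {n m : ℕ} (hm : m ≤ n) {O : Set (En n)} {u : En n → ℝ}
    (hv : IsViscositySupersolution (fun _ _ _ M => sumSmallestEigs m M) (fun _ => 0) O u)
    {φ : En n → ℝ} {x₀ : En n} (hx₀ : x₀ ∈ O) (hφ : ContDiffAt ℝ 2 φ x₀)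
    (hmin : ∀ᶠ x in 𝓝 x₀, u x₀ - φ x₀ ≤ u x - φ x) :
    ∃ v : Fin m → En n, Orthonormal ℝ v ∧
      ∑ i, fderiv ℝ (fderiv ℝ φ) x₀ (v i) (v i) ≤ 0 := by
  obtain ⟨r, hr, hball⟩ := Metric.eventually_nhds_iff_ball.1 (hφ.eventually (by decide))
  let χ : ContDiffBump x₀ := ⟨r / 4, r / 2, by positivity, by linarith⟩
  let c : ℝ := u x₀ - φ x₀
  let Φ : En n → ℝ := fun x => χ x * (φ x + c)
  have hΦeq : Φ =ᶠ[𝓝 x₀] fun x => φ x + c := by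
    filter_upwards [χ.eventuallyEq_one] with x hx
    simp [Φ, hx]
  have hΦ : ContDiff ℝ 2 Φ := by
    rw [contDiff_iff_contDiffAt]
    intro y
    by_cases hy : y ∈ ball x₀ r
    · exact χ.contDiff.contDiffAt.mul ((hball y hy).add contDiffAt_const)
    · have : y ∉ tsupport χ := by
        rw [χ.tsupport_eq]
        simp only [χ, mem_closedBall, mem_ball, not_le, not_lt] at hy ⊢
        linarith
      have h0 := notMem_tsupport_iff_eventuallyEq.1 this
      have : Φ =ᶠ[𝓝 y] fun _ => 0 := by
        filter_upwards [h0] with x hx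
        simp [Φ, hx]
      exact contDiffAt_const.congr_of_eventuallyEq this
  have hx : Φ x₀ = u x₀ := by rw [hΦeq.eq_of_nhds]; simp [c]
  have key := hv Φ hΦ.contDiffOn x₀ hx₀ hx.symm (by
    refine IsLocalMin.on ?_ _
    filter_upwards [hΦeq, hmin] with x h1 h2
    rw [h1, hx]
    simp only [c]; linarith)
  simp only at key
  obtain ⟨v, hv1, hv2⟩ := sumSmallestEigs_eq hm (hess_isHermitian hΦ.contDiffAt (x := x₀))
  refine ⟨v, hv1, ?_⟩
  rw [hv2] at key
  simp only [hess_quadratic] at key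
  have : fderiv ℝ (fderiv ℝ Φ) x₀ = fderiv ℝ (fderiv ℝ φ) x₀ := by
    rw [hΦeq.fderiv.fderiv_eq]
    congr 1
    ext1 y
    simp
  rwa [this] at key

lemma lsc_ext {n : ℕ} (Ω : Set (En n)) (hΩopen : IsOpen Ω)
    (E : Set (En n)) (hEc : IsClosed E)
    (u : En n → ℝ) (hu : LowerSemicontinuousOn u (Ω \ E)) :
    LowerSemicontinuousOn (liminfExtension Ω E u) Ω := by
  intro x hx y hy
  by_cases hxE : x ∈ E
  · simp only [liminfExtension, if_pos hxE, gt_iff_lt] at hy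
    obtain ⟨y', hyy', hy'⟩ := exists_between hy
    have h1 := Filter.eventually_lt_of_lt_liminf hy'
    rw [eventually_nhdsWithin_iff] at h1
    have h2 := h1.eventually_nhds
    refine Filter.Eventually.filter_mono nhdsWithin_le_nhds (p := _) ?_ |>.and
      self_mem_nhdsWithin |>.mono (p := fun z => (∀ᶠ w in 𝓝 z, w ∈ Ω \ E → y' < (u w : EReal)) ∧ z ∈ Ω) ?_
    · exact h2
    · rintro z ⟨hz, hzΩ⟩
      by_cases hzE : z ∈ E
      · simp only [liminfExtension, if_pos hzE, gt_iff_lt]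
        refine hyy'.trans_le (Filter.le_liminf_of_le (by isBoundedDefault) ?_)
        rw [eventually_nhdsWithin_iff]
        exact hz.mono fun w hw h => (hw h).le
      · simp only [liminfExtension, if_neg hzE, gt_iff_lt]
        exact hyy'.trans (hz.self_of_nhds ⟨hzΩ, hzE⟩)
  · have hopen : IsOpen (Ω \ E) := hΩopen.sdiff hEc
    have hnh : Ω \ E ∈ 𝓝 x := hopen.mem_nhds ⟨hx, hxE⟩
    refine Filter.Eventually.filter_mono nhdsWithin_le_nhds ?_
    simp only [liminfExtension, if_neg hxE, gt_iff_lt] at hy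
    have hcont : LowerSemicontinuousWithinAt (fun z => (u z : EReal)) (Ω \ E) x := by
      intro t ht
      simp only [gt_iff_lt] at ht
      obtain ⟨q, hq1, hq2⟩ := EReal.lt_iff_exists_real_btwn.1 ht
      have := hu x ⟨hx, hxE⟩ q (by exact_mod_cast hq2)
      exact this.mono fun z hz => hq1.trans (EReal.coe_lt_coe_iff.2 hz)
    have := hcont y hy
    rw [nhdsWithin_eq_nhds.2 hnh] at this
    filter_upwards [this, hnh] with z hz hz2
    simp only [liminfExtension, if_neg hz2.2, gt_iff_lt]
    exact hz

section keyf
variable {X F : Type*} [NormedAddCommGroup X] [InnerProductSpace ℝ X] [FiniteDimensional ℝ X]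
  [NormedAddCommGroup F] [InnerProductSpace ℝ F] [FiniteDimensional ℝ F]

open ContinuousLinearMap in
lemma trace_proj_ge {k : ℕ} (hdim : Module.finrank ℝ F + k = Module.finrank ℝ X)
    (G : X →L[ℝ] F) (A : F →L[ℝ] F) (hTA : ∀ y, G (adjoint G (A y)) = y)
    (v : Fin (k + 2) → X) (hv : Orthonormal ℝ v) :
    2 ≤ ∑ i, inner ℝ (G (v i)) (A (G (v i))) := by
  let K := LinearMap.ker (G : X →ₗ[ℝ] F)
  have hsurj : LinearMap.range (G : X →ₗ[ℝ] F) = ⊤ :=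
    LinearMap.range_eq_top.2 fun y => ⟨_, hTA y⟩
  have hK : Module.finrank ℝ K = k := by
    have := LinearMap.finrank_range_add_finrank_ker (G : X →ₗ[ℝ] F)
    rw [hsurj, finrank_top] at this
    have h2 : Module.finrank ℝ K = Module.finrank ℝ (LinearMap.ker (G : X →ₗ[ℝ] F)) := rfl
    omega
  let e := stdOrthonormalBasis ℝ K
  have heq : ∀ x : X, inner ℝ (G x) (A (G x)) = ‖x‖ ^ 2 - ∑ j, (inner ℝ (e j : X) x) ^ 2 := by
    intro x
    set w := adjoint G (A (G x)) with hw
    have hGw : G w = G x := hTA _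
    have hker : x - w ∈ K := by
      change G (x - w) = 0
      rw [map_sub, hGw, sub_self]
    have horth : ∀ z ∈ K, inner ℝ z w = 0 := by
      intro z hz
      rw [hw, adjoint_inner_right]
      have : G z = 0 := hz
      rw [this, inner_zero_left]
    have h1 : inner ℝ (G x) (A (G x)) = inner ℝ x w := by
      rw [hw, adjoint_inner_right]
    have h2 : inner ℝ (x - w) w = 0 := horth _ hker
    have h3 : ∑ j, (inner ℝ (e j : X) x) ^ 2 = ‖x - w‖ ^ 2 := by
      have := e.sum_sq_norm_inner_right ⟨x - w, hker⟩
      simp only [Submodule.coe_inner, Real.norm_eq_abs, sq_abs] at this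
      have h5 : ‖(⟨x - w, hker⟩ : K)‖ = ‖x - w‖ := rfl
      rw [h5] at this
      rw [← this]
      refine Finset.sum_congr rfl fun j _ => ?_
      rw [inner_sub_right, horth _ (e j).2, sub_zero]
    rw [h1, h3]
    have h6 : x = (x - w) + w := by abel
    have h7 : ‖x‖ ^ 2 = ‖x - w‖ ^ 2 + ‖w‖ ^ 2 := by
      conv_lhs => rw [h6]
      rw [norm_add_sq_real, h2]; ring
    have h8 : inner ℝ x w = ‖w‖ ^ 2 := by
      conv_lhs => rw [h6]
      rw [inner_add_left, h2, real_inner_self_eq_norm_sq]; ring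
    rw [h7, h8]; ring
  simp only [heq]
  rw [Finset.sum_sub_distrib, Finset.sum_comm]
  have h1 : ∑ i, ‖v i‖ ^ 2 = (k : ℝ) + 2 := by
    simp [hv.1]
  have h2 : ∑ j, ∑ i, (inner ℝ (e j : X) (v i)) ^ 2 ≤ k := by
    calc _ ≤ ∑ j : Fin (Module.finrank ℝ K), (1 : ℝ) := by
          refine Finset.sum_le_sum fun j _ => ?_
          have := hv.sum_inner_products_le (e j : X) (s := Finset.univ)
          have h3 : ‖(e j : X)‖ = 1 := e.orthonormal.1 j
          rw [h3] at this
          simp only [Real.norm_eq_abs, sq_abs] at this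
          simpa [real_inner_comm] using this
      _ = k := by simp [hK]
  linarith

/-- Second derivative of an inner product. -/
lemma snd_fderiv_inner {g h : X → F} {x : X} (hg : ContDiffAt ℝ 2 g x) (hh : ContDiffAt ℝ 2 h x)
    (v : X) :
    fderiv ℝ (fderiv ℝ (fun y => inner ℝ (g y) (h y))) x v v =
      inner ℝ (g x) (fderiv ℝ (fderiv ℝ h) x v v) + 2 * inner ℝ (fderiv ℝ g x v) (fderiv ℝ h x v)
        + inner ℝ (fderiv ℝ (fderiv ℝ g) x v v) (h x) := by
  have hf : ContDiffAt ℝ 2 (fun y => inner ℝ (g y) (h y) : X → ℝ) x := hg.inner ℝ hh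
  have d1g : DifferentiableAt ℝ (fderiv ℝ g) x :=
    (hg.fderiv_right (m := 1) (by norm_num)).differentiableAt (by norm_num)
  have d1h : DifferentiableAt ℝ (fderiv ℝ h) x :=
    (hh.fderiv_right (m := 1) (by norm_num)).differentiableAt (by norm_num)
  have d1f : DifferentiableAt ℝ (fderiv ℝ (fun y => inner ℝ (g y) (h y) : X → ℝ)) x :=
    (hf.fderiv_right (m := 1) (by norm_num)).differentiableAt (by norm_num)
  have d0g := hg.differentiableAt (by norm_num)
  have d0h := hh.differentiableAt (by norm_num)
  have e1g : fderiv ℝ (fun y => fderiv ℝ g y v) x v = fderiv ℝ (fderiv ℝ g) x v v := by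
    rw [fderiv_clm_apply d1g (differentiableAt_const v)]; simp
  have e1h : fderiv ℝ (fun y => fderiv ℝ h y v) x v = fderiv ℝ (fderiv ℝ h) x v v := by
    rw [fderiv_clm_apply d1h (differentiableAt_const v)]; simp
  have e1f : fderiv ℝ (fun y => fderiv ℝ (fun y => inner ℝ (g y) (h y) : X → ℝ) y v) x v
      = fderiv ℝ (fderiv ℝ (fun y => inner ℝ (g y) (h y) : X → ℝ)) x v v := by
    rw [fderiv_clm_apply d1f (differentiableAt_const v)]; simp
  rw [← e1f]
  have hev : (fun y => fderiv ℝ (fun y => inner ℝ (g y) (h y) : X → ℝ) y v) =ᶠ[𝓝 x]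
      fun y => inner ℝ (g y) (fderiv ℝ h y v) + inner ℝ (fderiv ℝ g y v) (h y) := by
    filter_upwards [hg.eventually (by decide), hh.eventually (by decide)] with y h1 h2
    exact fderiv_inner_apply ℝ (h1.differentiableAt (by norm_num))
      (h2.differentiableAt (by norm_num)) v
  have dgv : DifferentiableAt ℝ (fun y => fderiv ℝ g y v) x :=
    d1g.clm_apply (differentiableAt_const v)
  have dhv : DifferentiableAt ℝ (fun y => fderiv ℝ h y v) x :=
    d1h.clm_apply (differentiableAt_const v)
  rw [hev.fderiv_eq]
  rw [fderiv_fun_add (d0g.inner ℝ dhv) (dgv.inner ℝ d0h)]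
  rw [_root_.add_apply, fderiv_inner_apply ℝ d0g dhv, fderiv_inner_apply ℝ dgv d0h,
    e1g, e1h]
  ring

lemma snd_fderiv_comp {f : X → ℝ} {x : X} (hf : ContDiffAt ℝ 2 f x) {Φ Φ₁ : ℝ → ℝ} {c : ℝ}
    (hΦ : ∀ᶠ t in 𝓝 (f x), HasDerivAt Φ (Φ₁ t) t) (hΦ1 : HasDerivAt Φ₁ c (f x)) (v : X) :
    fderiv ℝ (fderiv ℝ (fun y => Φ (f y))) x v v =
      c * (fderiv ℝ f x v) ^ 2 + Φ₁ (f x) * fderiv ℝ (fderiv ℝ f) x v v := by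
  have hev : fderiv ℝ (fun y => Φ (f y)) =ᶠ[𝓝 x] fun y => Φ₁ (f y) • fderiv ℝ f y := by
    filter_upwards [hf.continuousAt.eventually hΦ, hf.eventually (by decide)] with y h1 h2
    exact (h1.comp_hasFDerivAt y (h2.differentiableAt (by norm_num)).hasFDerivAt).fderiv
  rw [hev.fderiv_eq]
  have d1f : DifferentiableAt ℝ (fderiv ℝ f) x :=
    (hf.fderiv_right (m := 1) (by norm_num)).differentiableAt (by norm_num)
  have d0f := (hf.differentiableAt (by norm_num)).hasFDerivAt
  have h2 := (hΦ1.comp_hasFDerivAt x d0f)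
  have := (h2.smul d1f.hasFDerivAt).fderiv
  have h3 : fderiv ℝ (fun y => Φ₁ (f y) • fderiv ℝ f y) x = _ := this
  rw [h3]
  simp
  ring

lemma eventually_norm_le {Z Y : Type*} [TopologicalSpace Z] [NormedAddCommGroup Y] {q : Z → Y}
    {p : Z} (h : ContinuousAt q p) : ∀ᶠ B : ℝ in atTop, ∀ᶠ x in 𝓝 p, ‖q x‖ ≤ B := by
  filter_upwards [eventually_gt_atTop ‖q p‖] with B hB
  exact (h.norm.eventually_lt continuousAt_const hB).mono fun x hx => hx.le

open ContinuousLinearMap in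
lemma exists_f {k : ℕ} (hdim : Module.finrank ℝ F + k = Module.finrank ℝ X)
    {g : X → F} {p : X} (hg : ContDiffAt ℝ 4 g p)
    (hsurj : Function.Surjective (fderiv ℝ g p)) :
    ∃ (f : X → ℝ) (C : ℝ), 0 < C ∧ ∀ᶠ x in 𝓝 p, ContDiffAt ℝ 2 f x ∧ 0 ≤ f x ∧
      ‖g x‖ ≤ C * √(f x) ∧ √(f x) ≤ C * ‖g x‖ ∧ ‖fderiv ℝ f x‖ ≤ 2 * √(f x) + C * f x ∧
      ∀ v : Fin (k + 2) → X, Orthonormal ℝ v →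
        4 - C * √(f x) ≤ ∑ i, fderiv ℝ (fderiv ℝ f) x (v i) (v i) := by
  let G : X → X →L[ℝ] F := fderiv ℝ g
  let T : X → F →L[ℝ] F := fun x => G x ∘L adjoint (G x)
  let A : X → F →L[ℝ] F := fun x => Ring.inverse (T x)
  let h : X → F := fun x => A x (g x)
  let f : X → ℝ := fun x => inner ℝ (g x) (h x)
  have hG : ContDiffAt ℝ 3 G p := hg.fderiv_right (by norm_num)
  have hadj : ContDiff ℝ 3 (fun L : X →L[ℝ] F => adjoint L) := by
    have : IsBoundedLinearMap ℝ (fun L : X →L[ℝ] F => adjoint L) := by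
      refine ⟨⟨fun a b => map_add _ a b, fun c a => ?_⟩, 1, one_pos, fun a => ?_⟩
      · simp
      · simp
    exact this.contDiff
  have hT : ContDiffAt ℝ 3 T p := hG.clm_comp (hadj.contDiffAt.comp p hG)
  have hTunit : IsUnit (T p) := by
    have hinj : Function.Injective (T p) := by
      rw [injective_iff_map_eq_zero]
      intro y hy
      have h1 : ‖adjoint (G p) y‖ ^ 2 = 0 := by
        rw [← real_inner_self_eq_norm_sq, adjoint_inner_left]
        change inner ℝ y (T p y) = 0
        rw [hy, inner_zero_right]
      have h2 : adjoint (G p) y = 0 := by simpa using h1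
      obtain ⟨z, hz⟩ := hsurj y
      have : inner ℝ y y = 0 := by
        have h5 : inner ℝ (G p z) y = 0 := by
          rw [← adjoint_inner_right, h2, inner_zero_right]
        rwa [show G p z = y from hz] at h5
      exact inner_self_eq_zero.1 this
    rw [ContinuousLinearMap.isUnit_iff_bijective]
    exact ⟨hinj, LinearMap.surjective_of_injective (f := (T p : F →ₗ[ℝ] F)) hinj⟩
  have hA : ContDiffAt ℝ 3 A p := by
    obtain ⟨t, ht⟩ := hTunit
    have h1 : ContDiffAt ℝ 3 Ring.inverse (T p) := by
      rw [← ht]; exact contDiffAt_ringInverse ℝ t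
    exact h1.comp p hT
  have hh : ContDiffAt ℝ 3 h p := hA.clm_apply (hg.of_le (by norm_num))
  have hunit : ∀ᶠ x in 𝓝 p, IsUnit (T x) :=
    hT.continuousAt.eventually (Units.isOpen.mem_nhds hTunit)
  have c0 := eventually_norm_le hG.continuousAt
  have c1 := eventually_norm_le hA.continuousAt
  have c2 := eventually_norm_le (hA.fderiv_right (m := 2) (by norm_num)).continuousAt
  have c3 := eventually_norm_le (hG.fderiv_right (m := 2) (by norm_num)).continuousAt
  have c4 := eventually_norm_le
    ((hh.fderiv_right (m := 2) (by norm_num)).fderiv_right (m := 1) (by norm_num)).continuousAt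
  obtain ⟨B, b0, b1, b2, b3, b4, hB1⟩ := (c0.and <| c1.and <| c2.and <| c3.and <| c4.and <|
    eventually_ge_atTop 1).exists
  have hB0 : 0 < B := by linarith
  refine ⟨f, (k + 2) * 4 * B ^ 3, by positivity, ?_⟩
  filter_upwards [b0, b1, b2, b3, b4, hunit, hg.eventually (by decide), hA.eventually (by decide),
    hh.eventually (by decide)] with x b0 b1 b2 b3 b4 hu hg hA hh
  have hBB : B ≤ B ^ 2 := by nlinarith
  have hBBB : B ^ 2 ≤ B ^ 3 := by nlinarith
  have hCB : B ^ 3 ≤ (k + 2) * 4 * B ^ 3 := by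
    have : (0:ℝ) ≤ k := by positivity
    have h3 : 0 < B ^ 3 := by positivity
    nlinarith
  have hTA : ∀ y, T x (A x y) = y := fun y => by
    have := Ring.mul_inverse_cancel _ hu
    exact DFunLike.congr_fun this y
  have hfs : f x = ‖adjoint (G x) (h x)‖ ^ 2 := by
    rw [← real_inner_self_eq_norm_sq, adjoint_inner_left, real_inner_comm]
    change _ = inner ℝ (T x (A x (g x))) (h x)
    rw [hTA]
  have hf0 : 0 ≤ f x := by rw [hfs]; positivity
  have hs : √(f x) = ‖adjoint (G x) (h x)‖ := by rw [hfs, Real.sqrt_sq (norm_nonneg _)]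
  set s := √(f x) with hsdef
  have hs0 : 0 ≤ s := Real.sqrt_nonneg _
  have hss : f x = s ^ 2 := by rw [hsdef, Real.sq_sqrt hf0]
  have hgs : ‖g x‖ ≤ B * s := by
    calc ‖g x‖ = ‖G x (adjoint (G x) (h x))‖ := congrArg norm (hTA (g x)).symm
      _ ≤ ‖G x‖ * ‖adjoint (G x) (h x)‖ := le_opNorm _ _
      _ ≤ B * s := by rw [← hs]; gcongr
  have hhg : ‖h x‖ ≤ B * ‖g x‖ := (le_opNorm _ _).trans (by gcongr)
  have hsg : s ≤ B ^ 2 * ‖g x‖ := by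
    rw [hs]
    calc _ ≤ ‖adjoint (G x)‖ * ‖h x‖ := le_opNorm _ _
      _ ≤ B * (B * ‖g x‖) := by
          have : ‖adjoint (G x)‖ ≤ B := by simpa using b0
          gcongr
      _ = _ := by ring
  have hAsymm : ∀ a b, inner ℝ a (A x b) = inner ℝ (A x a) b := by
    intro a b
    calc inner ℝ a (A x b) = inner ℝ (T x (A x a)) (A x b) := by rw [hTA]
      _ = inner ℝ (A x a) (T x (A x b)) := by
          change inner ℝ (G x (adjoint (G x) (A x a))) _ = inner ℝ _ (G x (adjoint (G x) (A x b)))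
          exact (adjoint_inner_right _ _ _).symm.trans (adjoint_inner_left _ _ _)
      _ = _ := by rw [hTA]
  have hh' : ∀ v, fderiv ℝ h x v = A x (G x v) + fderiv ℝ A x v (g x) := by
    intro v
    change fderiv ℝ (fun y => A y (g y)) x v = _
    rw [fderiv_clm_apply (hA.differentiableAt (by norm_num)) (hg.differentiableAt (by norm_num))]
    simp [G]
  have hA'v : ∀ v, ‖fderiv ℝ A x v (g x)‖ ≤ B * ‖v‖ * ‖g x‖ := fun v =>
    (le_opNorm _ _).trans (by gcongr; exact (le_opNorm _ _).trans (by gcongr))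
  have hhx2 : ContDiffAt ℝ 2 h x := hh.of_le (by norm_num)
  have hgx2 : ContDiffAt ℝ 2 g x := hg.of_le (by norm_num)
  refine ⟨hgx2.inner ℝ hhx2, hf0, ?_, ?_, ?_, ?_⟩
  · exact hgs.trans (by gcongr; linarith)
  · exact hsg.trans (by gcongr; linarith)
  · refine opNorm_le_bound _ (by positivity) fun v => ?_
    change ‖fderiv ℝ (fun y => inner ℝ (g y) (h y)) x v‖ ≤ _
    rw [fderiv_inner_apply ℝ (hg.differentiableAt (by norm_num))
      (hh.differentiableAt (by norm_num)), hh', inner_add_right, hAsymm]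
    have e1 : inner ℝ (A x (g x)) (G x v) = inner ℝ (adjoint (G x) (h x)) v := by
      rw [adjoint_inner_left]
    have e2 : inner ℝ (fderiv ℝ g x v) (h x) = inner ℝ (adjoint (G x) (h x)) v := by
      rw [adjoint_inner_left, real_inner_comm]
    rw [e1, e2]
    have i1 : ‖(inner ℝ (adjoint (G x) (h x)) v : ℝ)‖ ≤ s * ‖v‖ := by
      rw [hs]; exact norm_inner_le_norm _ _
    have i2 : ‖(inner ℝ (g x) (fderiv ℝ A x v (g x)) : ℝ)‖ ≤ B ^ 3 * s ^ 2 * ‖v‖ := by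
      calc _ ≤ ‖g x‖ * ‖fderiv ℝ A x v (g x)‖ := norm_inner_le_norm _ _
        _ ≤ (B * s) * (B * ‖v‖ * (B * s)) := by
            gcongr
            exact (hA'v v).trans (by gcongr)
        _ = _ := by ring
    have i3 : B ^ 3 * s ^ 2 * ‖v‖ ≤ (k + 2) * 4 * B ^ 3 * f x * ‖v‖ := by
      rw [hss]; gcongr
    refine (norm_add_le _ _).trans ?_
    refine (add_le_add_left (norm_add_le _ _) _).trans ?_
    linarith
  · intro v hv
    have htr := trace_proj_ge hdim (G x) (A x) hTA v hv
    have hterm : ∀ i, 2 * inner ℝ (G x (v i)) (A x (G x (v i))) - 4 * B ^ 3 * s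
        ≤ fderiv ℝ (fderiv ℝ f) x (v i) (v i) := by
      intro i
      have hn : ‖v i‖ = 1 := hv.1 i
      rw [snd_fderiv_inner hgx2 hhx2, hh', inner_add_right]
      have j1 : |(inner ℝ (g x) (fderiv ℝ (fderiv ℝ h) x (v i) (v i)) : ℝ)| ≤ B ^ 3 * s := by
        calc _ ≤ ‖g x‖ * ‖fderiv ℝ (fderiv ℝ h) x (v i) (v i)‖ := abs_real_inner_le_norm _ _
          _ ≤ (B * s) * B := by
              gcongr
              refine (le_opNorm₂ _ _ _).trans ?_
              rw [hn]; linarith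
          _ = B ^ 2 * s := by ring
          _ ≤ _ := by gcongr
      have j2 : |(inner ℝ (fderiv ℝ g x (v i)) (fderiv ℝ A x (v i) (g x)) : ℝ)| ≤ B ^ 3 * s := by
        calc _ ≤ ‖fderiv ℝ g x (v i)‖ * ‖fderiv ℝ A x (v i) (g x)‖ := abs_real_inner_le_norm _ _
          _ ≤ B * (B * 1 * (B * s)) := by
              gcongr
              · refine (le_opNorm _ _).trans ?_
                rw [hn, mul_one]; exact b0
              · refine (hA'v _).trans ?_
                rw [hn]; gcongr
          _ = _ := by ring
      have j3 : |(inner ℝ (fderiv ℝ (fderiv ℝ g) x (v i) (v i)) (h x) : ℝ)| ≤ B ^ 3 * s := by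
        calc _ ≤ ‖fderiv ℝ (fderiv ℝ g) x (v i) (v i)‖ * ‖h x‖ := abs_real_inner_le_norm _ _
          _ ≤ B * (B * (B * s)) := by
              gcongr
              · refine (le_opNorm₂ _ _ _).trans ?_
                rw [hn, mul_one, mul_one]; exact b3
              · refine hhg.trans ?_
                gcongr
          _ = _ := by ring
      have := (abs_le.1 j1).1
      have := (abs_le.1 j2).1
      have := (abs_le.1 j3).1
      change _ ≤ _ + 2 * (inner ℝ (G x (v i)) (A x (G x (v i))) + _) + _
      linarith
    refine le_trans ?_ (Finset.sum_le_sum fun i _ => hterm i)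
    rw [Finset.sum_sub_distrib, ← Finset.mul_sum]
    simp only [Finset.sum_const, Finset.card_univ, Fintype.card_fin, nsmul_eq_mul]
    push_cast
    linarith
end keyf

lemma four_le_infty : (4 : WithTop ℕ∞) ≤ ((⊤ : ℕ∞) : WithTop ℕ∞) := by
  change ((4 : ℕ∞) : WithTop ℕ∞) ≤ _
  exact WithTop.coe_le_coe.2 le_top

lemma chart_data {n k : ℕ} {E : Set (En n)} (hE : IsSmoothClosedSubmanifold k E)
    {p : En n} (hp : p ∈ E) :
    ∃ g : En n → EuclideanSpace ℝ {i : Fin n // k ≤ (i : ℕ)}, ContDiffAt ℝ 4 g p ∧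
      Function.Surjective (fderiv ℝ g p) ∧ ∀ᶠ x in 𝓝 p, (g x = 0 ↔ x ∈ E) := by
  obtain ⟨U, V, φ, ψ, hU, hV, hpU, hφ, hψ, hmφ, hmψ, hl, hr, him⟩ := hE.2 p hp
  let L0 : En n →ₗ[ℝ] EuclideanSpace ℝ {i : Fin n // k ≤ (i : ℕ)} :=
    { toFun := fun z => WithLp.toLp 2 fun i => z i.1
      map_add' := fun a b => by ext; simp
      map_smul' := fun a b => by ext; simp }
  let L := LinearMap.toContinuousLinearMap L0
  have hLap : ∀ z i, L z i = z i.1 := fun z i => rfl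
  have hφp : ContDiffAt ℝ 4 φ p := (hφ.contDiffAt (hU.mem_nhds hpU)).of_le four_le_infty
  have hψp : ContDiffAt ℝ 4 ψ (φ p) := (hψ.contDiffAt (hV.mem_nhds (hmφ hpU))).of_le four_le_infty
  have hdφ := hφp.differentiableAt (by norm_num)
  have hdψ := hψp.differentiableAt (by norm_num)
  refine ⟨fun x => L (φ x), L.contDiff.contDiffAt.comp p hφp, ?_, ?_⟩
  · have hd : fderiv ℝ (fun x => L (φ x)) p = L ∘L fderiv ℝ φ p :=
      (L.hasFDerivAt.comp p hdφ.hasFDerivAt).fderiv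
    rw [hd]
    have hcomp : fderiv ℝ φ p ∘L fderiv ℝ ψ (φ p) = ContinuousLinearMap.id ℝ _ := by
      have h1 : HasFDerivAt (φ ∘ ψ) (fderiv ℝ φ p ∘L fderiv ℝ ψ (φ p)) (φ p) := by
        refine HasFDerivAt.comp _ ?_ hdψ.hasFDerivAt
        rw [hl p hpU]; exact hdφ.hasFDerivAt
      have h2 : HasFDerivAt (φ ∘ ψ) (ContinuousLinearMap.id ℝ (En n)) (φ p) := by
        refine (hasFDerivAt_id _).congr_of_eventuallyEq ?_
        filter_upwards [hV.mem_nhds (hmφ hpU)] with z hz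
        exact hr z hz
      exact h1.unique h2
    intro y
    refine ⟨fderiv ℝ ψ (φ p) (WithLp.toLp 2 fun i : Fin n => if h : k ≤ (i : ℕ) then y ⟨i, h⟩ else 0), ?_⟩
    have := DFunLike.congr_fun hcomp
      (WithLp.toLp 2 fun i : Fin n => if h : k ≤ (i : ℕ) then y ⟨i, h⟩ else 0)
    simp only [ContinuousLinearMap.comp_apply, ContinuousLinearMap.id_apply] at this ⊢
    rw [this]
    ext i
    rw [hLap]
    simp [i.2]
  · filter_upwards [hU.mem_nhds hpU] with x hx
    have h0 : L (φ x) = 0 ↔ ∀ i : Fin n, k ≤ (i : ℕ) → φ x i = 0 := by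
      constructor
      · intro h i hi
        have := congrArg (fun z => z ⟨i, hi⟩) h
        simpa [hLap] using this
      · intro h
        ext i
        rw [hLap]; simpa using h i.1 i.2
    rw [h0]
    constructor
    · intro h
      have : φ x ∈ φ '' (E ∩ U) := by rw [him]; exact ⟨hmφ hx, h⟩
      obtain ⟨y, ⟨hyE, hyU⟩, hy⟩ := this
      rw [← hl x hx, ← hy, hl y hyU]; exact hyE
    · intro h
      have : φ x ∈ φ '' (E ∩ U) := ⟨x, ⟨h, hx⟩, rfl⟩
      rw [him] at this
      exact this.2

lemma norm_g_le {n : ℕ} {F : Type*} [NormedAddCommGroup F] [NormedSpace ℝ F] {E : Set (En n)}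
    (hEc : IsCompact E) {p : En n}
    (hp : p ∈ E) {g : En n → F} (hg : ContDiffAt ℝ 4 g p)
    (h0 : ∀ᶠ x in 𝓝 p, (g x = 0 ↔ x ∈ E)) :
    ∃ K : ℝ, 0 ≤ K ∧ ∀ᶠ x in 𝓝 p, ‖g x‖ ≤ K * infDist x E := by
  obtain ⟨K, t, ht, hK⟩ := (hg.of_le (by norm_num : (1 : WithTop ℕ∞) ≤ 4)).exists_lipschitzOnWith
  refine ⟨K, K.2, ?_⟩
  obtain ⟨r, hr, hb⟩ := Metric.eventually_nhds_iff_ball.1 (h0.and (Filter.eventually_mem_set.2 ht))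
  filter_upwards [Metric.ball_mem_nhds p (half_pos hr)] with x hx
  obtain ⟨q, hqE, hq⟩ := hEc.exists_infDist_eq_dist ⟨p, hp⟩ x
  have h1 : dist x q ≤ dist x p := by rw [← hq]; exact infDist_le_dist_of_mem hp
  rw [mem_ball] at hx
  have hqb : q ∈ ball p r := by
    rw [mem_ball]
    have := dist_triangle q x p
    rw [dist_comm q x] at this
    linarith
  have hxb : x ∈ ball p r := by rw [mem_ball]; linarith
  have := hK.dist_le_mul x (hb x hxb).2 q (hb q hqb).2
  rw [(hb q hqb).1.2 hqE, dist_zero_right] at this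
  rw [hq]; exact this

lemma barrier_arith {s e α C M Q S : ℝ} (hs : 0 < s) (he : 0 < e) (hα : 0 < α) (hC : 0 < C)
    (hsC : s * C ≤ 1) (hαC : 12 * C * α ≤ e) (hsm : s * (4 * e * C + 2 * M) < e)
    (hQ : Q ≤ (2 * s + C * s ^ 2) ^ 2) (hS : 4 - C * s ≤ S) :
    M < (-(e / (4 * s ^ 3)) - α / s ^ 4) * Q + (e / (2 * s) + α / s ^ 2) * S := by
  have h1 : (-(e / (4 * s ^ 3)) - α / s ^ 4) * (2 * s + C * s ^ 2) ^ 2 ≤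
      (-(e / (4 * s ^ 3)) - α / s ^ 4) * Q := by
    apply mul_le_mul_of_nonpos_left hQ
    have : 0 < e / (4 * s ^ 3) := by positivity
    have : 0 < α / s ^ 4 := by positivity
    linarith
  have h2 : (e / (2 * s) + α / s ^ 2) * (4 - C * s) ≤ (e / (2 * s) + α / s ^ 2) * S :=
    mul_le_mul_of_nonneg_left hS (by positivity)
  have h3 : (-(e / (4 * s ^ 3)) - α / s ^ 4) * (2 * s + C * s ^ 2) ^ 2
      + (e / (2 * s) + α / s ^ 2) * (4 - C * s)
      = (e - e * C * s * (3 / 2) - e * (C * s) ^ 2 / 4 - α * (5 * C + C * (C * s))) / s := by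
    field_simp
    ring
  have h4 : M < (e - e * C * s * (3 / 2) - e * (C * s) ^ 2 / 4 - α * (5 * C + C * (C * s))) / s := by
    rw [lt_div_iff₀ hs]
    have i1 : (C * s) ^ 2 ≤ C * s := by
      have : 0 < C * s := by positivity
      nlinarith
    have i2 : e * (C * s) ^ 2 ≤ e * (C * s) := by gcongr
    have i3 : α * (C * (C * s)) ≤ α * C := by
      have : C * (C * s) ≤ C * 1 := by gcongr; linarith
      calc α * (C * (C * s)) ≤ α * (C * 1) := by gcongr
        _ = _ := by ring
    have i4 : 0 < e * (C * s) := by positivity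
    nlinarith
  linarith

lemma main_contra {n : ℕ} (hn : 2 ≤ n) (Ω : Set (En n)) (hΩopen : IsOpen Ω)
    (k : ℕ) (hk : k ≤ n - 2)
    (E : Set (En n)) (hEΩ : E ⊆ Ω) (hE : IsSmoothClosedSubmanifold k E)
    (u : En n → ℝ) (hu : LowerSemicontinuousOn u (Ω \ E))
    (hvisc : IsViscositySupersolution
      (fun _ _ _ M => sumSmallestEigs (k + 2) M) (fun _ => 0) (Ω \ E) u)
    (η : En n → ℝ) (hη : ContDiffOn ℝ (⊤ : ℕ∞) η Ω) (p : En n) (hp : p ∈ E) (ε : ℝ) (hε : 0 < ε)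
    (a : ℝ) (hlow : ∀ x ∈ Ω \ E, a + η p + ε * infDist x E ≤ u x + η x)
    (hfreq : ∀ c > a, ∃ᶠ x in 𝓝[Ω \ E] p, u x < c) : False := by
  have hopen : IsOpen (Ω \ E) := hΩopen.sdiff hE.1.isClosed
  obtain ⟨g, hg, hgs, hg0⟩ := chart_data hE hp
  obtain ⟨K, hK0, hK⟩ := norm_g_le hE.1 hp hg hg0
  have hdim : Module.finrank ℝ (EuclideanSpace ℝ {i : Fin n // k ≤ (i : ℕ)}) + k
      = Module.finrank ℝ (En n) := by
    simp only [finrank_euclideanSpace, Fintype.card_fin]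
    have h1 : Fintype.card {i : Fin n // ¬ (k ≤ (i : ℕ))} = k := by
      simp only [not_le]
      rw [Fintype.card_subtype, Fin.card_filter_val_lt]
      omega
    have h2 := Fintype.card_subtype_compl (fun i : Fin n => k ≤ (i : ℕ))
    have h3 := Fintype.card_subtype_le (fun i : Fin n => k ≤ (i : ℕ))
    simp only [Fintype.card_fin] at h2 h3
    omega
  obtain ⟨f, C, hC, hf⟩ := exists_f hdim hg hgs
  let ζ : En n → ℝ := fun x => η x + ‖x - p‖ ^ 2
  have hζp : ContDiffAt ℝ 4 ζ p := by
    refine ((hη.contDiffAt (hΩopen.mem_nhds (hEΩ hp))).of_le four_le_infty).add ?_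
    exact (contDiff_id.sub contDiff_const).norm_sq ℝ |>.contDiffAt
  obtain ⟨M, hM, hM0⟩ := ((eventually_norm_le
    ((hζp.fderiv_right (m := 3) (by norm_num)).fderiv_right (m := 2)
      (by norm_num)).continuousAt).and (eventually_ge_atTop 0)).exists
  set e : ℝ := ε / (C * K + 1) with he_def
  have hCK : 0 < C * K + 1 := by positivity
  have he : 0 < e := by positivity
  have hgp : g p = 0 := hg0.self_of_nhds.2 hp
  have hfp : √(f p) = 0 := by
    have := hf.self_of_nhds.2.2.2.1
    rw [hgp, norm_zero, mul_zero] at this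
    exact le_antisymm this (Real.sqrt_nonneg _)
  set M' : ℝ := (k + 2) * M with hM'
  have hM'0 : 0 ≤ M' := by positivity
  have hscont : ContinuousAt (fun x => √(f x)) p := hf.self_of_nhds.1.continuousAt.sqrt
  have hsm : ∀ᶠ x in 𝓝 p, √(f x) * C < 1 ∧ √(f x) * (4 * e * C + 2 * M') < e ∧ √(f x) < 1 := by
    refine Filter.Eventually.and ?_ (Filter.Eventually.and ?_ ?_)
    · refine (hscont.mul continuousAt_const).eventually_lt continuousAt_const ?_
      rw [Pi.mul_apply, hfp]; simp
    · refine (hscont.mul continuousAt_const).eventually_lt continuousAt_const ?_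
      rw [Pi.mul_apply, hfp]; simpa using he
    · refine hscont.eventually_lt continuousAt_const ?_
      rw [hfp]; simp
  obtain ⟨r, hr, hball⟩ := Metric.nhds_basis_closedBall.eventually_iff.1
    (hf.and <| hg0.and <| hK.and <| hM.and <| hsm.and <|
    (hζp.eventually (by decide)).and <| hΩopen.mem_nhds (hEΩ hp))
  -- choose the interior comparison point
  have hηc : ContinuousAt η p := (hη.contDiffAt (hΩopen.mem_nhds (hEΩ hp))).continuousAt
  have hev1 : ∀ᶠ x in 𝓝 p, η x < η p + r ^ 2 / 6 :=
    hηc.eventually_lt continuousAt_const (by have : 0 < r ^ 2 := by positivity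
                                             linarith)
  have hev2 : ∀ᶠ x in 𝓝 p, ‖x - p‖ ^ 2 < r ^ 2 / 3 := by
    have : ContinuousAt (fun x : En n => ‖x - p‖ ^ 2) p := by fun_prop
    refine this.eventually_lt continuousAt_const ?_
    simp; positivity
  have hev3 : ∀ᶠ x in 𝓝 p, x ∈ closedBall p r := Metric.closedBall_mem_nhds p hr
  obtain ⟨x₁, hux₁, hx₁O, h1x, h2x, h3x⟩ := ((hfreq (a + r ^ 2 / 6) (by
    have : 0 < r ^ 2 := by positivity
    linarith)).and_eventually ((eventually_mem_nhdsWithin (s := Ω \ E)).and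
      (nhdsWithin_le_nhds (hev1.and (hev2.and hev3))))).exists
  have hfpos : ∀ x ∈ closedBall p r, x ∉ E → 0 < f x := by
    intro x hx hxE
    obtain ⟨⟨_, h0, h2, _⟩, h4, _⟩ := hball hx
    refine lt_of_le_of_ne h0 fun h => hxE (h4.1 ?_)
    rw [← h, Real.sqrt_zero, mul_zero] at h2
    exact norm_le_zero_iff.1 h2
  have hfE : ∀ x ∈ closedBall p r, x ∈ E → f x = 0 := by
    intro x hx hxE
    obtain ⟨⟨_, h0, _, h3, _⟩, h4, _⟩ := hball hx
    rw [h4.2 hxE, norm_zero, mul_zero] at h3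
    exact (Real.sqrt_eq_zero h0).1 (le_antisymm h3 (Real.sqrt_nonneg _))
  have hf1 : ∀ x ∈ closedBall p r, f x < 1 := by
    intro x hx
    have := (hball hx).2.2.2.2.1.2.2
    rwa [Real.sqrt_lt' one_pos, one_pow] at this
  -- choose α
  obtain ⟨α, hα, hα1, hα2⟩ : ∃ α : ℝ, 0 < α ∧ 12 * C * α ≤ e ∧ -(α * Real.log (f x₁)) < r ^ 2 / 3 := by
    have hl : Real.log (f x₁) < 0 := Real.log_neg (hfpos x₁ h3x hx₁O.2) (hf1 x₁ h3x)
    refine ⟨min (e / (12 * C)) (r ^ 2 / 6 / (-Real.log (f x₁))), ?_, ?_, ?_⟩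
    · apply lt_min (by positivity)
      apply div_pos (by positivity) (by linarith)
    · calc _ ≤ 12 * C * (e / (12 * C)) := by gcongr; exact min_le_left _ _
        _ = e := by field_simp
    · have h5 := min_le_right (e / (12 * C)) (r ^ 2 / 6 / (-Real.log (f x₁)))
      rw [le_div_iff₀ (by linarith)] at h5
      have : 0 < r ^ 2 := by positivity
      linarith
  let Φ : ℝ → ℝ := fun t => e * √t + α * Real.log t
  let W : En n → ℝ := fun x => u x + (ζ x - Φ (f x))
  have hWlow : ∀ x ∈ closedBall p r, x ∉ E → a + η p + ‖x - p‖ ^ 2 - α * Real.log (f x) ≤ W x := by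
    intro x hx hxE
    obtain ⟨⟨_, h0, h2, h3, _⟩, h4, h5, _, _, _, hxΩ⟩ := hball hx
    have h6 := hlow x ⟨hxΩ, hxE⟩
    have h7 : e * √(f x) ≤ ε * infDist x E := by
      have h8 : √(f x) ≤ (C * K + 1) * infDist x E := by
        have : C * ‖g x‖ ≤ C * (K * infDist x E) := by gcongr
        have h9 : 0 ≤ infDist x E := infDist_nonneg
        nlinarith
      calc e * √(f x) ≤ e * ((C * K + 1) * infDist x E) := by gcongr
        _ = ε * infDist x E := by rw [he_def]; field_simp
    simp only [W, ζ, Φ]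
    linarith
  have hW1 : W x₁ < a + η p + r ^ 2 := by
    have : 0 ≤ e * √(f x₁) := by positivity
    simp only [W, ζ, Φ]
    linarith
  set τ : ℝ := Real.exp (-((W x₁ - a - η p + 1) / α)) with hτ
  have hτpos : 0 < τ := Real.exp_pos _
  have hsmallf : ∀ x ∈ closedBall p r, x ∉ E → f x < τ → W x₁ < W x := by
    intro x hx hxE hlt
    have h1 := hWlow x hx hxE
    have h2 : Real.log (f x) < -((W x₁ - a - η p + 1) / α) := by
      rw [Real.log_lt_iff_lt_exp (hfpos x hx hxE)]; exact hlt
    have h3 : α * Real.log (f x) < -(W x₁ - a - η p + 1) := by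
      calc _ < α * (-((W x₁ - a - η p + 1) / α)) := by gcongr
        _ = _ := by field_simp
    have : 0 ≤ ‖x - p‖ ^ 2 := by positivity
    linarith
  have hfcont : ContinuousOn f (closedBall p r) := fun x hx =>
    (hball hx).1.1.continuousAt.continuousWithinAt
  let S : Set (En n) := closedBall p r ∩ f ⁻¹' Set.Ici τ
  have hScpt : IsCompact S := (isCompact_closedBall p r).of_isClosed_subset
    (hfcont.preimage_isClosed_of_isClosed isClosed_closedBall isClosed_Ici) inter_subset_left
  have hSE : ∀ x ∈ S, x ∉ E := by
    intro x hx hxE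
    have h1 := hfE x hx.1 hxE
    have h2 : τ ≤ f x := hx.2
    linarith
  have hx₁S : x₁ ∈ S := ⟨h3x, by
    change τ ≤ f x₁
    by_contra h
    exact lt_irrefl _ (hsmallf x₁ h3x hx₁O.2 (not_le.1 h))⟩
  have hSsub : S ⊆ Ω \ E := fun x hx => ⟨(hball hx.1).2.2.2.2.2.2, hSE x hx⟩
  have hWlsc : LowerSemicontinuousOn W S := by
    refine (hu.mono hSsub).add (ContinuousOn.lowerSemicontinuousOn ?_)
    intro x hx
    have hfx : ContinuousAt f x := (hball hx.1).1.1.continuousAt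
    have hfx0 : f x ≠ 0 := (hfpos x hx.1 (hSE x hx)).ne'
    refine ContinuousAt.continuousWithinAt ?_
    refine (hball hx.1).2.2.2.2.2.1.continuousAt.sub ?_
    exact (continuousAt_const.mul hfx.sqrt).add (continuousAt_const.mul (hfx.log hfx0))
  obtain ⟨x₀, hx₀S, hmin⟩ := hWlsc.exists_isMinOn ⟨x₁, hx₁S⟩ hScpt
  have hx₀1 : W x₀ ≤ W x₁ := hmin hx₁S
  have hminall : ∀ x ∈ closedBall p r, x ∉ E → W x₀ ≤ W x := by
    intro x hx hxE
    by_cases h : f x < τ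
    · exact hx₀1.trans (hsmallf x hx hxE h).le
    · exact hmin (show x ∈ S from ⟨hx, not_lt.1 h⟩)
  have hx₀ball : x₀ ∈ ball p r := by
    rw [mem_ball]
    refine lt_of_le_of_ne hx₀S.1 fun h => ?_
    have h1 := hWlow x₀ hx₀S.1 (hSE _ hx₀S)
    rw [← dist_eq_norm, h] at h1
    have h2 : Real.log (f x₀) < 0 :=
      Real.log_neg (hfpos x₀ hx₀S.1 (hSE _ hx₀S)) (hf1 x₀ hx₀S.1)
    have := mul_neg_of_pos_of_neg hα h2
    linarith
  have hx₀O := hSsub hx₀S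
  obtain ⟨⟨hf2, hf0, -, -, hfd, hftr⟩, -, -, hMx, ⟨hs1, hs2, -⟩, hζ4, -⟩ := hball hx₀S.1
  have hfx₀ : 0 < f x₀ := hfpos x₀ hx₀S.1 (hSE _ hx₀S)
  have hΦf : ContDiffAt ℝ 2 (fun x => Φ (f x)) x₀ :=
    (contDiffAt_const.mul (hf2.sqrt hfx₀.ne')).add (contDiffAt_const.mul (hf2.log hfx₀.ne'))
  have hζ2 : ContDiffAt ℝ 2 ζ x₀ := hζ4.of_le (by norm_num)
  obtain ⟨v, hv, hsum⟩ := visc_local (by omega) hvisc (φ := fun x => Φ (f x) - ζ x) hx₀O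
    (hΦf.sub hζ2) (by
      filter_upwards [hopen.mem_nhds hx₀O, Metric.isOpen_ball.mem_nhds hx₀ball] with x hxO hxb
      have := hminall x (ball_subset_closedBall hxb) hxO.2
      simp only [W] at this
      linarith)
  set s := √(f x₀) with hs
  have hspos : 0 < s := Real.sqrt_pos.2 hfx₀
  have hss : f x₀ = s ^ 2 := (Real.sq_sqrt hf0).symm
  have hd2 : ∀ w, fderiv ℝ (fderiv ℝ (fun x => Φ (f x) - ζ x)) x₀ w w =
      ((-(e / (4 * s ^ 3)) - α / s ^ 4) * (fderiv ℝ f x₀ w) ^ 2 + (e / (2 * s) + α / s ^ 2) *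
        fderiv ℝ (fderiv ℝ f) x₀ w w) - fderiv ℝ (fderiv ℝ ζ) x₀ w w := by
    intro w
    have h1 : fderiv ℝ (fun x => Φ (f x) - ζ x) =ᶠ[𝓝 x₀]
        fun x => fderiv ℝ (fun x => Φ (f x)) x - fderiv ℝ ζ x := by
      filter_upwards [hΦf.eventually (by decide), hζ2.eventually (by decide)] with x h1 h2
      exact fderiv_fun_sub (h1.differentiableAt (by norm_num)) (h2.differentiableAt (by norm_num))
    rw [h1.fderiv_eq, fderiv_fun_sub
      ((hΦf.fderiv_right (m := 1) (by norm_num)).differentiableAt (by norm_num))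
      ((hζ2.fderiv_right (m := 1) (by norm_num)).differentiableAt (by norm_num))]
    rw [_root_.sub_apply, _root_.sub_apply]
    congr 1
    have hΦ1 : ∀ t : ℝ, 0 < t → HasDerivAt Φ (e * (1 / (2 * √t)) + α * t⁻¹) t := fun t ht =>
      ((Real.hasDerivAt_sqrt ht.ne').const_mul e).add ((Real.hasDerivAt_log ht.ne').const_mul α)
    have hΦ2 : HasDerivAt (fun t : ℝ => e * (1 / (2 * √t)) + α * t⁻¹)
        (-(e / (4 * s ^ 3)) - α / s ^ 4) (f x₀) := by
      have q1 : HasDerivAt (fun t : ℝ => (2 * √t)) (2 * (1 / (2 * √(f x₀)))) (f x₀) :=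
        (Real.hasDerivAt_sqrt hfx₀.ne').const_mul 2
      have q2 := (q1.fun_inv (by positivity)).const_mul e
      have q3 := (hasDerivAt_inv hfx₀.ne').const_mul α
      have q4 := q2.add q3
      simp only [one_div]
      refine q4.congr_deriv ?_
      rw [← hs, hss]
      field_simp
      ring
    rw [snd_fderiv_comp hf2 ((lt_mem_nhds hfx₀).mono hΦ1) hΦ2]
    rw [← hs, hss]
    congr 2
    field_simp
  simp only [hd2, Finset.sum_sub_distrib, Finset.sum_add_distrib, ← Finset.mul_sum] at hsum
  have hQ : ∑ i, (fderiv ℝ f x₀ (v i)) ^ 2 ≤ (2 * s + C * s ^ 2) ^ 2 := by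
    have h1 := hv.sum_inner_products_le ((InnerProductSpace.toDual ℝ (En n)).symm (fderiv ℝ f x₀))
      (s := Finset.univ)
    rw [LinearIsometryEquiv.norm_map] at h1
    have h2 : ∀ i, ‖(inner ℝ (v i) ((InnerProductSpace.toDual ℝ (En n)).symm (fderiv ℝ f x₀)) : ℝ)‖ ^ 2
        = (fderiv ℝ f x₀ (v i)) ^ 2 := by
      intro i
      rw [real_inner_comm, InnerProductSpace.toDual_symm_apply, Real.norm_eq_abs, sq_abs]
    simp only [h2] at h1
    refine h1.trans ?_
    rw [← hss]
    gcongr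
  have hMs : ∑ i, fderiv ℝ (fderiv ℝ ζ) x₀ (v i) (v i) ≤ M' := by
    calc _ ≤ ∑ i : Fin (k + 2), M := by
          refine Finset.sum_le_sum fun i _ => ?_
          refine (Real.le_norm_self _).trans ?_
          refine (ContinuousLinearMap.le_opNorm₂ _ _ _).trans ?_
          rw [hv.1 i, mul_one, mul_one]; exact hMx
      _ = M' := by simp [hM']
  have := barrier_arith hspos he hα hC hs1.le hα1 hs2 hQ (hftr v hv)
  linarith

/-- **Theorem 1.4.** If `u ∈ LSC(Ω \ E)` is bounded below and satisfies
`λ₁(∇²u) + ⋯ + λ_{k+2}(∇²u) ≤ 0` in `Ω \ E` in the viscosity sense, where `E ⊂ Ω` is a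
smooth closed `k`-dimensional submanifold with `0 ≤ k ≤ n-2`, then the extension of `u`
to `E` by `u(x) := liminf_{y → x, y ∈ Ω \ E} u(y)` is lower semicontinuous on `Ω` and
lowerconical on `E`. -/
theorem extension_is_lowerconical
    {n : ℕ} (hn : 2 ≤ n) (Ω : Set (En n))
    (hΩopen : IsOpen Ω) (hΩconn : IsConnected Ω) (hΩbdd : Bornology.IsBounded Ω)
    (k : ℕ) (hk : k ≤ n - 2)
    (E : Set (En n)) (hEΩ : E ⊆ Ω) (hE : IsSmoothClosedSubmanifold k E)
    (u : En n → ℝ) (hu : LowerSemicontinuousOn u (Ω \ E))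
    (hubd : BddBelow (u '' (Ω \ E)))
    (hvisc : IsViscositySupersolution
      (fun _ _ _ M => sumSmallestEigs (k + 2) M) (fun _ => 0) (Ω \ E) u) :
    LowerSemicontinuousOn (liminfExtension Ω E u) Ω ∧
      ERealLowerConicalOn Ω (liminfExtension Ω E u) E := by
  refine ⟨lsc_ext Ω hΩopen E hE.1.isClosed u hu, ?_⟩
  intro η hη p hp ε hε
  by_contra hcon
  push Not at hcon
  have hvE : liminfExtension Ω E u p = Filter.liminf (fun y => (u y : EReal)) (𝓝[Ω \ E] p) := by
    simp only [liminfExtension, if_pos hp]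
  have hvO : ∀ x ∈ Ω \ E, liminfExtension Ω E u x = (u x : EReal) := by
    intro x hx
    simp only [liminfExtension, if_neg hx.2]
  obtain ⟨m, hm⟩ := hubd
  have hge : (m : EReal) ≤ liminfExtension Ω E u p := by
    rw [hvE]
    refine Filter.le_liminf_of_le (by isBoundedDefault) ?_
    filter_upwards [self_mem_nhdsWithin] with y hy
    exact EReal.coe_le_coe_iff.2 (hm ⟨y, hy, rfl⟩)
  have hne : (Ω \ E).Nonempty := by
    rw [Set.nonempty_iff_ne_empty]
    intro h
    have hEq : Ω = E := Set.Subset.antisymm (Set.sdiff_eq_empty.1 h) hEΩ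
    have hcl : IsClopen Ω := ⟨hEq ▸ hE.1.isClosed, hΩopen⟩
    have : Nonempty (Fin n) := ⟨⟨0, by omega⟩⟩
    rcases isClopen_iff.1 hcl with h0 | h0
    · exact hΩconn.nonempty.ne_empty h0
    · exact noncompact_univ (En n) (h0 ▸ hEq ▸ hE.1)
  induction hv : liminfExtension Ω E u p with
  | bot => rw [hv] at hge; exact (EReal.bot_lt_coe m).not_ge hge
  | top =>
    obtain ⟨x, hx⟩ := hne
    have h1 := hcon x hx.1
    rw [hv, hvO x hx, EReal.top_add_coe, ← EReal.coe_add, EReal.sub_top, EReal.bot_sub] at h1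
    simp at h1
  | coe a =>
    refine main_contra hn Ω hΩopen k hk E hEΩ hE u hu hvisc η hη p hp ε hε a ?_ ?_
    · intro x hx
      have h1 := hcon x hx.1
      rw [hv, hvO x hx] at h1
      have h2 : 0 ≤ u x + η x - (a + η p) - ε * infDist x E := by exact_mod_cast h1
      linarith
    · intro c hc
      have h1 : Filter.liminf (fun y => (u y : EReal)) (𝓝[Ω \ E] p) < (c : EReal) := by
        rw [← hvE, hv]; exact EReal.coe_lt_coe_iff.2 hc
      exact (Filter.frequently_lt_of_liminf_lt (by isBoundedDefault) h1).mono
        fun x hx => EReal.coe_lt_coe_iff.1 hx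
end
end

section
/- Let n ≥ 2 and −1 ≤ k ≤ n − 2, let E be a smooth closed embedded k-dimensional submanifold of ℝⁿ (with E = ∅ when k = −1, and E a finite set of points when k = 0), and let Ω ⊂ ℝⁿ be a domain (bounded connected open set). Assume u ∈ LSC(Ω̄ ∖ E) satisfies λ₁(∇²u) + ⋯ + λ_{k+2}(∇²u) ≤ 0 in Ω ∖ E in the viscosity sense, where λ₁(M) ≤ ⋯ ≤ λₙ(M) denote the eigenvalues of a symmetric matrix M in non-decreasing order, and inf_{Ω∖E} u > −∞. Then u ≥ inf_{∂Ω ∖ E} u on Ω ∖ E. -/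
open Set Metric

noncomputable section

open scoped InnerProductSpace

def Good {n : ℕ} (m : ℕ) (w : En n → ℝ) : Prop :=
  ContDiff ℝ 2 w ∧ ∀ x (v : Fin m → En n), Orthonormal ℝ v →
    0 < ∑ i, fderiv ℝ (fderiv ℝ w) x (v i) (v i)

lemma Good.diff2 {n m : ℕ} {w : En n → ℝ} (h : Good m w) :
    Differentiable ℝ w ∧ Differentiable ℝ (fderiv ℝ w) :=
  ⟨h.1.differentiable (by norm_num),
    (h.1.fderiv_right (m := 1) (by norm_num)).differentiable (by norm_num)⟩

lemma Good.add {n m : ℕ} {w₁ w₂ : En n → ℝ} (h₁ : Good m w₁) (h₂ : Good m w₂) :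
    Good m (fun x => w₁ x + w₂ x) := by
  refine ⟨h₁.1.add h₂.1, fun x v hv => ?_⟩
  have e1 : fderiv ℝ (fun x => w₁ x + w₂ x) = fun x => fderiv ℝ w₁ x + fderiv ℝ w₂ x := by
    funext y
    exact fderiv_fun_add (h₁.diff2.1 y) (h₂.diff2.1 y)
  rw [e1, fderiv_fun_add (h₁.diff2.2 x) (h₂.diff2.2 x)]
  simp only [add_apply, Finset.sum_add_distrib]
  exact add_pos (h₁.2 x v hv) (h₂.2 x v hv)

lemma Good.affine {n m : ℕ} {w : En n → ℝ} (h : Good m w) (a : ℝ) {t : ℝ} (ht : 0 < t) :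
    Good m (fun x => a + t * w x) := by
  refine ⟨contDiff_const.add (contDiff_const.mul h.1), fun x v hv => ?_⟩
  have e1 : fderiv ℝ (fun x => a + t * w x) = fun x => t • fderiv ℝ w x := by
    funext y
    rw [fderiv_const_add, fderiv_const_mul (h.diff2.1 y)]
  rw [e1, fderiv_fun_const_smul (h.diff2.2 x)]
  simp only [smul_apply, smul_eq_mul, ← Finset.mul_sum]
  exact mul_pos ht (h.2 x v hv)

lemma Good.sum {n m : ℕ} {ι : Type*} (s : Finset ι) (hs : s.Nonempty) (w : ι → En n → ℝ)
    (h : ∀ i ∈ s, Good m (w i)) : Good m (fun x => ∑ i ∈ s, w i x) := by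
  classical
  induction hs using Finset.Nonempty.cons_induction with
  | singleton a => simpa using h a (by simp)
  | cons a s ha hs ih =>
    simp only [Finset.sum_cons]
    exact (h a (by simp)).add (ih fun i hi => h i (by simp [hi]))

lemma good_radial {n m : ℕ} (y : En n) (g g1 g2 : ℝ → ℝ)
    (hc : ∀ s, 0 ≤ s → ContDiffAt ℝ 2 g s)
    (h1 : ∀ s, 0 ≤ s → HasDerivAt g (g1 s) s) (h2 : ∀ s, 0 ≤ s → HasDerivAt g1 (g2 s) s)
    (hneg : ∀ s, 0 ≤ s → g2 s ≤ 0)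
    (hpos : ∀ s, 0 ≤ s → 0 < 2 * m * g1 s + 4 * s * g2 s) :
    Good m (fun x : En n => g (‖x - y‖ ^ 2)) := by
  have hq : ∀ x : En n, HasFDerivAt (fun x : En n => ‖x - y‖ ^ 2)
      (2 • innerSL ℝ (x - y)) x := by
    intro x
    simpa using ((hasFDerivAt_id x).sub_const y).norm_sq
  have e1 : fderiv ℝ (fun x : En n => g (‖x - y‖ ^ 2)) =
      fun x => (g1 (‖x - y‖ ^ 2)) • ((2 : ℕ) • innerSL ℝ (x - y)) := by
    funext x
    exact ((h1 _ (sq_nonneg _)).comp_hasFDerivAt x (hq x)).fderiv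
  refine ⟨?_, ?_⟩
  · rw [contDiff_iff_contDiffAt]
    intro x
    exact ContDiffAt.comp x (hc _ (sq_nonneg _))
      ((contDiff_id.sub contDiff_const).norm_sq ℝ).contDiffAt
  · intro x v hv
    rw [e1]
    have hl : HasFDerivAt (fun x : En n => (2 : ℕ) • innerSL ℝ (x - y)) ((2:ℕ) • (innerSL ℝ : En n →L[ℝ] En n →L[ℝ] ℝ)) x := by
      have := ((2:ℕ) • (innerSL ℝ : En n →L[ℝ] En n →L[ℝ] ℝ)).hasFDerivAt (x := x - y)
      exact this.comp x ((hasFDerivAt_id x).sub_const y)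
    have hg := (h2 _ (sq_nonneg ‖x - y‖)).comp_hasFDerivAt x (hq x)
    have := (hg.smul hl).fderiv
    have e2 : ∀ w : En n, fderiv ℝ (fun x => (g1 (‖x - y‖ ^ 2)) • ((2 : ℕ) • innerSL ℝ (x - y))) x w w
        = 2 * g1 (‖x - y‖ ^ 2) * ‖w‖ ^ 2 + 4 * g2 (‖x - y‖ ^ 2) * (⟪w, x - y⟫_ℝ) ^ 2 := by
      intro w
      have h3 : (fun x => (g1 (‖x - y‖ ^ 2)) • ((2 : ℕ) • innerSL ℝ (x - y))) =
        ((g1 ∘ fun x : En n => ‖x - y‖ ^ 2) • fun x : En n => (2 : ℕ) • innerSL ℝ (x - y)) := rfl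
      rw [h3, this]
      simp
      have h5 : (innerSL ℝ w) w = ‖w‖ ^ 2 := real_inner_self_eq_norm_sq w
      rw [← inner_sub_left, real_inner_comm, h5]
      ring
    simp only [e2, hv.1, Finset.sum_add_distrib, ← Finset.mul_sum]
    have hb := hv.sum_inner_products_le (x - y) (s := Finset.univ)
    simp only [Real.norm_eq_abs, sq_abs] at hb
    have := hpos _ (sq_nonneg ‖x - y‖)
    have h4 := mul_le_mul_of_nonpos_left hb (hneg _ (sq_nonneg ‖x - y‖))
    simp
    nlinarith

lemma hess_pos {n m : ℕ} (hm : m ≤ n) {w : En n → ℝ} (h : Good m w) (x : En n) :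
    0 < sumSmallestEigs m (hess w x) := by
  have hent : ∀ i j, hess w x i j = fderiv ℝ (fderiv ℝ w) x (EuclideanSpace.single i 1) (EuclideanSpace.single j 1) := by
    intro i j
    simp [hess, iteratedFDeriv_two_apply]
  have hsymm : (hess w x).IsHermitian := by
    ext i j
    simp only [Matrix.conjTranspose_apply, star_trivial, hent]
    exact (h.1.contDiffAt.isSymmSndFDerivAt (by simp)) _ _
  have hquad : ∀ v : En n, fderiv ℝ (fderiv ℝ w) x v v = ⟪v, WithLp.toLp 2 ((hess w x).mulVec v.ofLp)⟫_ℝ := by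
    intro v
    have hv : v = ∑ i, v i • EuclideanSpace.single i (1:ℝ) := by
      ext j; simp [Finset.sum_apply, Pi.single_apply]
    conv_lhs => rw [hv]
    simp only [map_sum, map_smul, sum_apply, smul_apply,
      smul_eq_mul, ← hent, PiLp.inner_apply, Matrix.mulVec, dotProduct]
    simp [Finset.mul_sum, Finset.sum_mul]
    rw [Finset.sum_comm]
    refine Finset.sum_congr rfl fun i _ => Finset.sum_congr rfl fun j _ => ?_
    have := hsymm.apply i j
    simp at this
    try rw [this]
    ring
  set e := hsymm.eigenvectorBasis with he
  set σ := Tuple.sort hsymm.eigenvalues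
  have hval : ∀ i, fderiv ℝ (fderiv ℝ w) x (e i) (e i) = hsymm.eigenvalues i := by
    intro i
    rw [hquad, he, hsymm.mulVec_eigenvectorBasis]
    have : WithLp.toLp 2 (hsymm.eigenvalues i • (hsymm.eigenvectorBasis i).ofLp) = hsymm.eigenvalues i • hsymm.eigenvectorBasis i := rfl
    rw [this, inner_smul_right, real_inner_self_eq_norm_sq]
    simp
  have := h.2 x (fun i : Fin m => e (σ (Fin.castLE hm i)))
    (e.orthonormal.comp _ (σ.injective.comp (Fin.castLE_injective hm)))
  simp only [hval] at this
  have e3 : sumSmallestEigs m (hess w x) = ∑ i : Fin m, hsymm.eigenvalues (σ (Fin.castLE hm i)) := by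
    unfold sumSmallestEigs sortedEigs
    rw [dif_pos hsymm, ← Finset.sum_filter]
    symm
    refine Finset.sum_bij (fun i _ => Fin.castLE hm i) ?_ ?_ ?_ ?_
    · intro a _; simp
    · intro a _ b _ hab; exact Fin.castLE_injective hm hab
    · intro b hb
      simp at hb
      exact ⟨⟨b, hb⟩, by simp, by ext; simp⟩
    · intro a _; rfl
  rw [e3]; exact this

lemma barrier {n m : ℕ} (hm : m ≤ n) (E Ω : Set (En n)) (hΩ : IsOpen Ω)
    (hb : Bornology.IsBounded Ω) (u : En n → ℝ)
    (hu : LowerSemicontinuousOn u (closure Ω \ E))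
    (hvisc : IsViscositySupersolution
      (fun _ _ _ M => sumSmallestEigs m M) (fun _ => 0) (Ω \ E) u)
    (φ : En n → ℝ) (hφ : Good m φ) (hfr : ∀ y ∈ frontier Ω \ E, φ y ≤ u y)
    (N : Set (En n)) (hN : IsOpen N) (hEN : E ∩ closure Ω ⊆ N) (hNu : ∀ x ∈ N, x ∈ Ω \ E → φ x ≤ u x) :
    ∀ x ∈ Ω \ E, φ x ≤ u x := by
  intro x hx
  by_contra! hlt
  have hK : IsCompact (closure Ω \ N) := hb.isCompact_closure.diff hN
  have hxK : x ∈ closure Ω \ N := ⟨subset_closure hx.1, fun h => absurd (hNu x h hx) (not_le.2 hlt)⟩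
  have hsub : closure Ω \ N ⊆ closure Ω \ E := fun y hy => ⟨hy.1, fun h => hy.2 (hEN ⟨h, hy.1⟩)⟩
  have hl : LowerSemicontinuousOn (fun x => u x + - φ x) (closure Ω \ N) :=
    (hu.mono hsub).add (hφ.1.continuous.neg.lowerSemicontinuous.lowerSemicontinuousOn _)
  obtain ⟨x₀, hx₀, hmin⟩ := hl.exists_isMinOn ⟨x, hxK⟩ hK
  have h0 : u x₀ - φ x₀ < 0 := by
    have := hmin hxK
    simp at this
    linarith
  have hx₀Ω : x₀ ∈ Ω \ E := by
    refine ⟨?_, (hsub hx₀).2⟩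
    by_contra hn
    have : x₀ ∈ frontier Ω \ E := ⟨by rw [hΩ.frontier_eq]; exact ⟨hx₀.1, hn⟩, (hsub hx₀).2⟩
    linarith [hfr x₀ this]
  have hg := hφ.affine (u x₀ - φ x₀) one_pos
  have := hvisc _ hg.1.contDiffOn x₀ hx₀Ω (by ring) ?_
  · exact absurd this (not_le.2 (hess_pos hm hg x₀))
  · refine Filter.eventually_of_mem self_mem_nhdsWithin fun y hy => ?_
    by_cases hyN : y ∈ N
    · have := hNu y hyN hy
      simp only
      linarith
    · have := hmin (show y ∈ closure Ω \ N from ⟨subset_closure hy.1, hyN⟩)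
      simp at this ⊢
      linarith

def Polar {n : ℕ} (m : ℕ) (x₁ : En n) (R : ℝ) (S : Set (En n)) : Prop :=
  ∃ C : ℝ, ∀ K : ℝ, ∃ w : En n → ℝ, Good m w ∧ (∀ x, ‖x‖ ≤ R → w x ≤ 0) ∧ -C ≤ w x₁ ∧
    ∀ x ∈ S, ‖x‖ ≤ R → w x < -K

lemma polar_empty {n m : ℕ} (hm : 1 ≤ m) (x₁ : En n) (R : ℝ) : Polar m x₁ R ∅ := by
  refine ⟨R ^ 2, fun K => ⟨fun x => -R ^ 2 + 1 * (‖x - 0‖ ^ 2), ?_, ?_, ?_, by simp⟩⟩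
  · refine Good.affine ?_ _ one_pos
    refine good_radial 0 (fun s => s) (fun _ => 1) (fun _ => 0) (fun s _ => contDiffAt_id)
      (fun s _ => hasDerivAt_id s) (fun s _ => hasDerivAt_const _ _) (by simp) ?_
    intro s _
    have : (1:ℝ) ≤ m := by exact_mod_cast hm
    linarith
  · intro x hx
    simp only [sub_zero]
    nlinarith [norm_nonneg x]
  · simp only [sub_zero]
    nlinarith [norm_nonneg x₁]

lemma Polar.union {n m : ℕ} {x₁ : En n} {R : ℝ} {S T : Set (En n)} (hS : Polar m x₁ R S)
    (hT : Polar m x₁ R T) : Polar m x₁ R (S ∪ T) := by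
  obtain ⟨C, hC⟩ := hS
  obtain ⟨D, hD⟩ := hT
  refine ⟨C + D, fun K => ?_⟩
  obtain ⟨w, h1, h2, h3, h4⟩ := hC K
  obtain ⟨w', h1', h2', h3', h4'⟩ := hD K
  refine ⟨_, h1.add h1', fun x hx => by linarith [h2 x hx, h2' x hx], by linarith, ?_⟩
  rintro x (hx | hx) hR
  · linarith [h4 x hx hR, h2' x hR]
  · linarith [h4' x hx hR, h2 x hR]

lemma Polar.mono {n m : ℕ} {x₁ : En n} {R : ℝ} {S T : Set (En n)} (hST : S ⊆ T)
    (hT : Polar m x₁ R T) : Polar m x₁ R S := by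
  obtain ⟨D, hD⟩ := hT
  refine ⟨D, fun K => ?_⟩
  obtain ⟨w, h1, h2, h3, h4⟩ := hD K
  exact ⟨w, h1, h2, h3, fun x hx => h4 x (hST hx)⟩

lemma main_of_polar {n m : ℕ} (hm : m ≤ n) (E Ω : Set (En n)) (hΩ : IsOpen Ω)
    (hb : Bornology.IsBounded Ω) (u : En n → ℝ)
    (hu : LowerSemicontinuousOn u (closure Ω \ E))
    (hubd : BddBelow (u '' (Ω \ E)))
    (hvisc : IsViscositySupersolution
      (fun _ _ _ M => sumSmallestEigs m M) (fun _ => 0) (Ω \ E) u)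
    (hpol : ∀ x₁ ∉ E, ∀ R, Polar m x₁ R E) :
    ∀ m : ℝ, (∀ y ∈ frontier Ω \ E, m ≤ u y) → ∀ x ∈ Ω \ E, m ≤ u x := by
  intro a ha x hx
  obtain ⟨B, hB⟩ := hubd
  have hB' : ∀ y ∈ Ω \ E, B ≤ u y := fun y hy => hB ⟨y, hy, rfl⟩
  obtain ⟨R, hR⟩ := hb.closure.subset_closedBall 0
  have hR' : ∀ y ∈ closure Ω, ‖y‖ ≤ R := fun y hy => by simpa using hR hy
  refine le_of_forall_pos_le_add fun ε hε => ?_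
  obtain ⟨C, hC⟩ := hpol x hx.2 R
  set t := ε / (max C 1) with ht
  have hmax : 0 < max C 1 := lt_max_of_lt_right one_pos
  have htpos : 0 < t := div_pos hε hmax
  obtain ⟨w, h1, h2, h3, h4⟩ := hC ((a - B) / t)
  have key := barrier hm E Ω hΩ hb u hu hvisc _ (h1.affine a htpos)
    (fun y hy => by
      have h5 := h2 y (hR' y (frontier_subset_closure hy.1))
      have := ha y hy
      nlinarith) {y | w y < -((a - B) / t)} (isOpen_lt h1.1.continuous continuous_const)
    (fun y hy => h4 y hy.1 (hR' y hy.2))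
    (fun y hy hyΩ => by
      have h6 := hB' y hyΩ
      have h7 : t * w y ≤ t * (-((a - B) / t)) := mul_le_mul_of_nonneg_left (le_of_lt hy) htpos.le
      have h8 : t * (-((a - B) / t)) = -(a - B) := by field_simp
      linarith) x hx
  have h9 : t * max C 1 = ε := by rw [ht]; field_simp
  have h10 : t * (-(max C 1)) ≤ t * w x :=
    mul_le_mul_of_nonneg_left (by linarith [le_max_left C 1]) htpos.le
  linarith

lemma good_log {n : ℕ} (y : En n) {η : ℝ} (hη : 0 < η) :
    Good 2 (fun x : En n => Real.log (‖x - y‖ ^ 2 + η)) := by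
  refine good_radial y (fun s => Real.log (s + η)) (fun s => (s + η)⁻¹)
    (fun s => - 1 / (s + η) ^ 2) ?_ ?_ ?_ ?_ ?_
  · intro s hs
    exact (contDiffAt_id.add contDiffAt_const).log (by simp; positivity)
  · intro s hs
    have := ((hasDerivAt_id s).add_const η).log (by simp; positivity)
    simpa using this
  · intro s hs
    exact ((hasDerivAt_id s).add_const η).inv (by simp; positivity)
  · intro s hs
    exact div_nonpos_of_nonpos_of_nonneg (by norm_num) (by positivity)
  · intro s hs
    have : 2 * ((2 : ℕ) : ℝ) * (s + η)⁻¹ + 4 * s * (-1 / (s + η) ^ 2) = 4 * η / (s + η) ^ 2 := by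
      have : s + η ≠ 0 := by positivity
      push_cast
      field_simp
      ring
    rw [this]
    positivity

lemma good_pow {n : ℕ} (k : ℕ) (hk : 1 ≤ k) (y : En n) {η : ℝ} (hη : 0 < η) :
    Good (k + 2) (fun x : En n => - (‖x - y‖ ^ 2 + η) ^ (-(k / 2 : ℝ))) := by
  have hk' : (1 : ℝ) ≤ k := by exact_mod_cast hk
  refine good_radial y (fun s => -(s + η) ^ (-(k / 2 : ℝ)))
    (fun s => (k / 2 : ℝ) * (s + η) ^ (-(k / 2 : ℝ) - 1))
    (fun s => (k / 2 : ℝ) * ((-(k / 2 : ℝ) - 1) * (s + η) ^ (-(k / 2 : ℝ) - 1 - 1))) ?_ ?_ ?_ ?_ ?_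
  · intro s hs
    exact ((contDiffAt_id.add contDiffAt_const).rpow_const_of_ne (by simp; positivity)).neg
  · intro s hs
    have := (((hasDerivAt_id s).add_const η).rpow_const (p := -(k / 2 : ℝ))
      (Or.inl (by simp; positivity))).neg
    refine this.congr_deriv ?_
    simp only [id, one_mul, neg_mul, neg_neg]
  · intro s hs
    have := (((hasDerivAt_id s).add_const η).rpow_const (p := -(k / 2 : ℝ) - 1)
      (Or.inl (by simp; positivity))).const_mul (k / 2 : ℝ)
    refine this.congr_deriv ?_
    simp only [id, one_mul, neg_mul, neg_neg]
  · intro s hs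
    have : 0 < (s + η) ^ (-(k / 2 : ℝ) - 1 - 1) := by positivity
    have h2 : (-(k / 2 : ℝ) - 1) * (s + η) ^ (-(k / 2 : ℝ) - 1 - 1) ≤ 0 :=
      mul_nonpos_of_nonpos_of_nonneg (by linarith) this.le
    exact mul_nonpos_of_nonneg_of_nonpos (by positivity) h2
  · intro s hs
    have hp : 0 < s + η := by positivity
    have h1 : (s + η) ^ (-(k / 2 : ℝ) - 1) = (s + η) ^ (-(k / 2 : ℝ) - 1 - 1) * (s + η) := by
      rw [Real.rpow_sub_one hp.ne' (-(k / 2 : ℝ) - 1)]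
      field_simp
    rw [h1]
    set P := (s + η) ^ (-(k / 2 : ℝ) - 1 - 1)
    have hP : 0 < P := by positivity
    have : 2 * ((k + 2 : ℕ) : ℝ) * ((k / 2 : ℝ) * (P * (s + η))) +
      4 * s * ((k / 2 : ℝ) * ((-(k / 2 : ℝ) - 1) * P)) = k * (k + 2) * P * η := by
      push_cast
      ring
    rw [this]
    positivity

lemma polar_point {n : ℕ} (x₁ x : En n) (hx : x₁ ≠ x) (R : ℝ) : Polar 2 x₁ R {x} := by
  have hd : 0 < ‖x₁ - x‖ := norm_pos_iff.2 (sub_ne_zero.2 hx)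
  set A := (|R| + ‖x‖) ^ 2 + 1 with hA
  refine ⟨-(-Real.log A + 1 * Real.log (‖x₁ - x‖ ^ 2)), fun K => ?_⟩
  set η := min 1 (Real.exp (-K - 1 + Real.log A)) with hη
  have hηpos : 0 < η := lt_min one_pos (Real.exp_pos _)
  refine ⟨_, (good_log x hηpos).affine (-Real.log A) one_pos, ?_, ?_, ?_⟩
  · intro y hy
    have : ‖y - x‖ ^ 2 + η ≤ A := by
      have h1 : ‖y - x‖ ≤ |R| + ‖x‖ := (norm_sub_le _ _).trans (by linarith [le_abs_self R])
      have h2 : ‖y - x‖ ^ 2 ≤ (|R| + ‖x‖) ^ 2 := pow_le_pow_left₀ (norm_nonneg _) h1 2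
      have := min_le_left 1 (Real.exp (-K - 1 + Real.log A))
      linarith
    have := Real.log_le_log (by positivity) this
    linarith
  · have : Real.log (‖x₁ - x‖ ^ 2) ≤ Real.log (‖x₁ - x‖ ^ 2 + η) :=
      Real.log_le_log (by positivity) (by linarith)
    linarith
  · rintro y rfl _
    have : Real.log η ≤ -K - 1 + Real.log A := by
      rw [Real.log_le_iff_le_exp hηpos]
      exact min_le_right _ _
    simp
    linarith

/-- The lattice sum lower bound. -/
lemma lattice_sum (k M : ℕ) (hk : 1 ≤ k) (a : Fin k → ℕ) (ha : ∀ i, a i ≤ 2 * M)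
    (F : (Fin k → ℕ) → ℝ) (hF : ∀ q, 0 ≤ F q) (c : ℝ)
    (hc : ∀ (j : ℕ) (p : Fin k → ℕ), (∀ i, p i ≤ j) → c * ((j : ℝ) + 1)⁻¹ ^ k ≤ F (a + p)) :
    c * ∑ j ∈ Finset.range M, ((j : ℝ) + 1)⁻¹ ≤
      ∑ q ∈ Fintype.piFinset (fun _ : Fin k => Finset.range (3 * M)), F q := by
  classical
  obtain ⟨l, rfl⟩ : ∃ l, k = l + 1 := ⟨k - 1, by omega⟩
  let S : ℕ → Finset (Fin (l + 1) → ℕ) := fun j =>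
    Fintype.piFinset (Fin.cons {j} (fun _ => Finset.range (j + 1)))
  have hS : ∀ j p, p ∈ S j → p 0 = j ∧ ∀ i, p i ≤ j := by
    intro j p hp
    simp only [S, Fintype.mem_piFinset] at hp
    have h0 : p 0 = j := by simpa using hp 0
    refine ⟨h0, fun i => ?_⟩
    refine Fin.cases h0.le (fun i => ?_) i
    have := hp i.succ
    simp at this
    omega
  have hcard : ∀ j, (S j).card = (j + 1) ^ l := by
    intro j
    simp [S, Fintype.card_piFinset, Fin.prod_univ_succ]
  have hdisj : Set.PairwiseDisjoint (↑(Finset.range M)) S := by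
    intro i _ j _ hij
    rw [Function.onFun, Finset.disjoint_left]
    intro p hp hp'
    exact hij ((hS i p hp).1.symm.trans (hS j p hp').1)
  set T := (Finset.range M).biUnion S with hT
  have hsub : T.image (fun p => a + p) ⊆ Fintype.piFinset (fun _ => Finset.range (3 * M)) := by
    intro q hq
    simp only [Finset.mem_image, hT, Finset.mem_biUnion, Finset.mem_range] at hq
    obtain ⟨p, ⟨j, hj, hp⟩, rfl⟩ := hq
    simp only [Fintype.mem_piFinset, Finset.mem_range, Pi.add_apply]
    intro i
    have := (hS j p hp).2 i
    have := ha i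
    omega
  calc c * ∑ j ∈ Finset.range M, ((j : ℝ) + 1)⁻¹
      = ∑ j ∈ Finset.range M, ∑ p ∈ S j, c * ((j : ℝ) + 1)⁻¹ ^ (l + 1) := by
        rw [Finset.mul_sum]
        refine Finset.sum_congr rfl fun j _ => ?_
        rw [Finset.sum_const, hcard]
        have : (j : ℝ) + 1 ≠ 0 := by positivity
        simp
        field_simp
        ring
    _ ≤ ∑ j ∈ Finset.range M, ∑ p ∈ S j, F (a + p) :=
        Finset.sum_le_sum fun j _ => Finset.sum_le_sum fun p hp => hc j p (hS j p hp).2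
    _ = ∑ p ∈ T, F (a + p) := (Finset.sum_biUnion hdisj).symm
    _ = ∑ q ∈ T.image (fun p => a + p), F q := by
        rw [Finset.sum_image]
        intro p _ q _ h
        exact add_left_cancel h
    _ ≤ _ := Finset.sum_le_sum_of_subset_of_nonneg hsub fun q _ _ => hF q

/-- A Lipschitz image of a `k`-cube is polar. -/
lemma polar_cube {n : ℕ} (k : ℕ) (hk : 1 ≤ k) (E : Set (En n)) (x₁ : En n) {d : ℝ} (hd : 0 < d)
    (hdE : ∀ y ∈ E, d ≤ ‖x₁ - y‖) (R : ℝ) (f : (Fin k → ℝ) → En n) (a₀ : Fin k → ℝ)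
    {r L : ℝ} (hr : 0 < r) (hL : 0 < L)
    (hfE : ∀ z, (∀ i, |z i - a₀ i| ≤ 2 * r) → f z ∈ E)
    (hf : ∀ z z', (∀ i, |z i - a₀ i| ≤ 2 * r) → (∀ i, |z' i - a₀ i| ≤ 2 * r) →
      ∀ δ, 0 ≤ δ → (∀ i, |z i - z' i| ≤ δ) → ‖f z - f z'‖ ≤ L * δ) :
    Polar (k + 2) x₁ R (f '' {z | ∀ i, |z i - a₀ i| ≤ r}) := by
  have hd2 : 0 < d ^ 2 := by positivity
  refine ⟨(3 * r) ^ k * (d ^ 2) ^ (-(k / 2 : ℝ)), fun K => ?_⟩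
  set c : ℝ := (2 * L ^ 2) ^ (-(k / 2 : ℝ)) with hc
  have hcpos : 0 < c := by positivity
  obtain ⟨M, hM0, hM⟩ : ∃ M : ℕ, 1 ≤ M ∧ K / c < ∑ j ∈ Finset.range M, ((j : ℝ) + 1)⁻¹ := by
    have := Real.tendsto_sum_range_one_div_nat_succ_atTop
    have h2 := (this.eventually_gt_atTop (K / c)).and (Filter.eventually_ge_atTop 1)
    obtain ⟨M, h3, h4⟩ := h2.exists
    exact ⟨M, h4, by simpa using h3⟩
  have hMpos : (0 : ℝ) < M := by exact_mod_cast hM0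
  set h := r / M with hh
  have hhpos : 0 < h := by positivity
  have hhM : h * M = r := by rw [hh]; field_simp
  set η := (L * h) ^ 2 with hη
  have hηpos : 0 < η := by positivity
  set Q := Fintype.piFinset (fun _ : Fin k => Finset.range (3 * M)) with hQ
  let g : (Fin k → ℕ) → (Fin k → ℝ) := fun q i => a₀ i - r + h * q i
  have hgr : ∀ q ∈ Q, ∀ i, |g q i - a₀ i| ≤ 2 * r := by
    intro q hq i
    simp only [hQ, Fintype.mem_piFinset, Finset.mem_range] at hq
    have h1 : (q i : ℝ) ≤ 3 * M := by exact_mod_cast (hq i).le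
    have h2 : h * q i ≤ h * (3 * M) := mul_le_mul_of_nonneg_left h1 hhpos.le
    have h3 : 0 ≤ h * q i := by positivity
    simp only [g]
    rw [abs_le]
    constructor <;> nlinarith
  have hQne : Q.Nonempty := by
    refine ⟨fun _ => 0, ?_⟩
    simp [hQ]; omega
  have hgood := Good.sum Q hQne (fun q x => 0 + h ^ k * (-(‖x - f (g q)‖ ^ 2 + η) ^ (-(k / 2 : ℝ))))
    (fun q _ => (good_pow k hk (f (g q)) hηpos).affine 0 (by positivity))
  refine ⟨_, hgood, ?_, ?_, ?_⟩
  · intro x _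
    refine Finset.sum_nonpos fun q _ => ?_
    have : 0 ≤ h ^ k * (‖x - f (g q)‖ ^ 2 + η) ^ (-(k / 2 : ℝ)) := by positivity
    linarith
  · have hcardQ : ((Q.card : ℕ) : ℝ) = (3 * M) ^ k := by
      simp [hQ, Fintype.card_piFinset]
    have : ∀ q ∈ Q, -(h ^ k * (d ^ 2) ^ (-(k / 2 : ℝ))) ≤
        0 + h ^ k * (-(‖x₁ - f (g q)‖ ^ 2 + η) ^ (-(k / 2 : ℝ))) := by
      intro q hq
      have h1 := hdE _ (hfE _ (hgr q hq))
      have h2 : d ^ 2 ≤ ‖x₁ - f (g q)‖ ^ 2 + η := by nlinarith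
      have h3 : (‖x₁ - f (g q)‖ ^ 2 + η) ^ (-(k / 2 : ℝ)) ≤ (d ^ 2) ^ (-(k / 2 : ℝ)) :=
        Real.rpow_le_rpow_of_nonpos hd2 h2 (by simp; positivity)
      have h4 := mul_le_mul_of_nonneg_left h3 (pow_nonneg hhpos.le k)
      linarith
    have := Finset.card_nsmul_le_sum Q _ _ this
    refine le_trans (le_of_eq ?_) this
    rw [nsmul_eq_mul, hcardQ, ← hhM]
    ring
  · rintro _ ⟨z, hz, rfl⟩ _
    simp only [mem_ofPred_eq] at hz
    have ht : ∀ i, 0 ≤ (z i - a₀ i + r) / h ∧ (z i - a₀ i + r) / h ≤ 2 * M := by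
      intro i
      have := abs_le.1 (hz i)
      refine ⟨div_nonneg (by linarith) hhpos.le, ?_⟩
      rw [div_le_iff₀ hhpos]
      nlinarith
    let a : Fin k → ℕ := fun i => ⌊(z i - a₀ i + r) / h⌋₊
    have ha : ∀ i, a i ≤ 2 * M := by
      intro i
      have h1 := Nat.floor_le (ht i).1
      have h2 : ((a i : ℕ) : ℝ) ≤ (2 * M : ℕ) := by
        push_cast
        exact h1.trans (ht i).2
      exact_mod_cast h2
    -- truncate F outside Q
    have key := lattice_sum k M hk a ha
      (fun q => if q ∈ Q then h ^ k * (‖f z - f (g q)‖ ^ 2 + η) ^ (-(k / 2 : ℝ)) else c)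
      (fun q => by
        split_ifs
        · positivity
        · exact hcpos.le) c ?_
    · have e1 : ∑ q ∈ Q, (0 + h ^ k * (-(‖f z - f (g q)‖ ^ 2 + η) ^ (-(k / 2 : ℝ)))) =
        -∑ q ∈ Q, (if q ∈ Q then h ^ k * (‖f z - f (g q)‖ ^ 2 + η) ^ (-(k / 2 : ℝ)) else c) := by
        rw [← Finset.sum_neg_distrib]
        refine Finset.sum_congr rfl fun q hq => ?_
        rw [if_pos hq]
        ring
      rw [e1]
      rw [div_lt_iff₀ hcpos] at hM
      linarith
    · intro j p hp
      have hj : (0 : ℝ) < (j : ℝ) + 1 := by positivity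
      split_ifs with hq
      · have hzz : ∀ i, |z i - g (a + p) i| ≤ h * (j + 1) := by
          intro i
          have h1 := Nat.floor_le (ht i).1
          have h2 := Nat.lt_floor_add_one ((z i - a₀ i + r) / h)
          rw [le_div_iff₀ hhpos] at h1
          rw [div_lt_iff₀ hhpos] at h2
          have h3 : (p i : ℝ) ≤ j := by exact_mod_cast hp i
          have h4 : h * p i ≤ h * j := mul_le_mul_of_nonneg_left h3 hhpos.le
          have h5 : 0 ≤ h * p i := by positivity
          have h6 : 0 ≤ h * (j : ℝ) := by positivity
          simp only [g, a, Pi.add_apply, Nat.cast_add]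
          rw [abs_le]
          constructor <;> nlinarith
        have hn := hf z (g (a + p)) (fun i => (hz i).trans (by linarith)) (hgr _ hq)
          (h * (j + 1)) (by positivity) hzz
        have h7 : ‖f z - f (g (a + p))‖ ^ 2 + η ≤ (2 * L ^ 2) * (h * (j + 1)) ^ 2 := by
          have h8 : ‖f z - f (g (a + p))‖ ^ 2 ≤ (L * (h * (j + 1))) ^ 2 :=
            pow_le_pow_left₀ (norm_nonneg _) hn 2
          have h9 : η ≤ (L * (h * (j + 1))) ^ 2 := by
            refine pow_le_pow_left₀ (by positivity) ?_ 2
            have : (0:ℝ) ≤ j := by positivity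
            have : 0 ≤ L * h * j := by positivity
            nlinarith
          nlinarith
        have h10 : ((2 * L ^ 2) * (h * (j + 1)) ^ 2) ^ (-(k / 2 : ℝ)) ≤
            (‖f z - f (g (a + p))‖ ^ 2 + η) ^ (-(k / 2 : ℝ)) :=
          Real.rpow_le_rpow_of_nonpos (by positivity) h7 (by simp; positivity)
        have h11 : ((2 * L ^ 2) * (h * (j + 1)) ^ 2) ^ (-(k / 2 : ℝ)) =
            c * ((h * (j + 1)) ^ k)⁻¹ := by
          rw [Real.mul_rpow (by positivity) (by positivity), ← Real.rpow_natCast (h * (j + 1)) 2,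
            ← Real.rpow_mul (by positivity), ← Real.rpow_natCast (h * (j + 1)) k,
            ← Real.rpow_neg (by positivity)]
          congr 2
          push_cast
          ring
        rw [h11] at h10
        have h12 := mul_le_mul_of_nonneg_left h10 (pow_nonneg hhpos.le k)
        refine le_trans (le_of_eq ?_) h12
        have h13 : ((j : ℝ) + 1) ^ k ≠ 0 := by positivity
        have h14 : h ^ k ≠ 0 := by positivity
        rw [mul_pow, inv_pow, mul_inv]
        field_simp
      · have : ((j : ℝ) + 1)⁻¹ ^ k ≤ 1 := by
          refine pow_le_one₀ (by positivity) (inv_le_one_of_one_le₀ ?_)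
          have : (0:ℝ) ≤ j := by positivity
          linarith
        nlinarith

def embCoord (n k : ℕ) (a : Fin k → ℝ) : En n :=
  WithLp.toLp 2 (fun i : Fin n => if h : (i : ℕ) < k then a ⟨i, h⟩ else 0)

lemma embCoord_dist (n k : ℕ) (a b : Fin k → ℝ) {δ : ℝ} (hδ : 0 ≤ δ) (h : ∀ i, |a i - b i| ≤ δ) :
    ‖embCoord n k a - embCoord n k b‖ ≤ (n + 1) * δ := by
  refine abs_le_of_sq_le_sq' ?_ (by positivity) |>.2
  rw [EuclideanSpace.norm_sq_eq]
  have : ∀ i ∈ Finset.univ, ‖(embCoord n k a - embCoord n k b) i‖ ^ 2 ≤ δ ^ 2 := by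
    intro i _
    refine pow_le_pow_left₀ (norm_nonneg _) ?_ 2
    simp only [embCoord, PiLp.sub_apply]
    split_ifs with hi
    · exact h _
    · simpa using hδ
  have h2 := Finset.sum_le_card_nsmul _ _ _ this
  simp at h2
  have : (0:ℝ) ≤ n := by positivity
  simp only [PiLp.sub_apply, Real.norm_eq_abs, sq_abs] at h2 ⊢
  have h3 : (n : ℝ) * δ ^ 2 ≤ (n + 1) ^ 2 * δ ^ 2 :=
    mul_le_mul_of_nonneg_right (by nlinarith) (sq_nonneg δ)
  rw [mul_pow]
  exact h2.trans h3

lemma embCoord_restrict {n k : ℕ} (hkn : k ≤ n) (z : En n) (hz : ∀ i : Fin n, k ≤ (i : ℕ) → z i = 0) :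
    embCoord n k (fun i => z (Fin.castLE hkn i)) = z := by
  ext i
  simp only [embCoord]
  split_ifs with hi
  · rfl
  · exact (hz i (not_lt.1 hi)).symm

lemma polar_submanifold {n k : ℕ} (hkn : k + 2 ≤ n) (E : Set (En n))
    (hE : IsSmoothClosedSubmanifold k E) (x₁ : En n) (hx₁ : x₁ ∉ E) (R : ℝ) :
    Polar (k + 2) x₁ R E := by
  refine hE.1.induction_on (p := Polar (k + 2) x₁ R) (polar_empty (by omega) _ _)
    (fun s t hst ht => ht.mono hst) (fun s t hs ht => hs.union ht) ?_
  intro x hx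
  obtain ⟨U, V, φ, ψ, hU, hV, hxU, hφ, hψ, hUV, hVU, hψφ, hφψ, him⟩ := hE.2 x hx
  have hplane : ∀ y ∈ E ∩ U, φ y ∈ V ∧ ∀ i : Fin n, k ≤ (i : ℕ) → φ y i = 0 := by
    intro y hy
    have : φ y ∈ φ '' (E ∩ U) := ⟨y, hy, rfl⟩
    rw [him] at this
    exact this
  rcases Nat.eq_zero_or_pos k with rfl | hk
  · refine ⟨E ∩ U, inter_mem_nhdsWithin _ (hU.mem_nhds hxU),
      (polar_point x₁ x (fun h => hx₁ (h ▸ hx)) R).mono ?_⟩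
    intro y hy
    have : φ y = φ x := by
      ext i
      rw [(hplane y hy).2 i (Nat.zero_le _), (hplane x ⟨hx, hxU⟩).2 i (Nat.zero_le _)]
    rw [mem_singleton_iff, ← hψφ y hy.2, this, hψφ x hxU]
  · obtain ⟨d, hd, hdE⟩ : ∃ d : ℝ, 0 < d ∧ ∀ y ∈ E, d ≤ ‖x₁ - y‖ := by
      obtain ⟨d, hd, h⟩ := Metric.isOpen_iff.1 hE.1.isClosed.isOpen_compl x₁ hx₁
      refine ⟨d, hd, fun y hy => ?_⟩
      by_contra! hlt
      exact h (by rwa [mem_ball, dist_comm, dist_eq_norm]) hy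
    have hz0 := hplane x ⟨hx, hxU⟩
    have hψz : ContDiffAt ℝ 1 ψ (φ x) :=
      (hψ.contDiffAt (hV.mem_nhds hz0.1)).of_le (by exact_mod_cast le_top)
    obtain ⟨K, t, ht, hlip⟩ := hψz.exists_lipschitzOnWith
    obtain ⟨ρ, hρ, hball⟩ := Metric.mem_nhds_iff.1 (Filter.inter_mem (hV.mem_nhds hz0.1) ht)
    have hn1 : (0:ℝ) < (n : ℝ) + 1 := by positivity
    set r := ρ / (4 * (n + 1)) with hr
    have hrpos : 0 < r := by positivity
    have hrρ : (n + 1) * (2 * r) < ρ := by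
      rw [hr]
      field_simp
      norm_num
    set a₀ : Fin k → ℝ := fun i => φ x (Fin.castLE (by omega) i) with ha₀
    have he0 : embCoord n k a₀ = φ x := embCoord_restrict (by omega) _ hz0.2
    have hin : ∀ z : Fin k → ℝ, (∀ i, |z i - a₀ i| ≤ 2 * r) → embCoord n k z ∈ V ∩ t := by
      intro z hz
      apply hball
      rw [mem_ball, dist_eq_norm, ← he0]
      exact (embCoord_dist n k z a₀ (by positivity) hz).trans_lt hrρ
    have hp := polar_cube k hk E x₁ hd hdE R (fun z => ψ (embCoord n k z)) a₀ hrpos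
      (L := (K + 1) * (n + 1)) (by positivity) ?_ ?_
    · refine ⟨E ∩ (U ∩ φ ⁻¹' ball (φ x) r), inter_mem_nhdsWithin _ (Filter.inter_mem (hU.mem_nhds hxU)
        ((hφ.continuousOn.continuousAt (hU.mem_nhds hxU)).preimage_mem_nhds (ball_mem_nhds _ hrpos))),
        hp.mono ?_⟩
      rintro y ⟨hyE, hyU, hyb⟩
      refine ⟨fun i => φ y (Fin.castLE (by omega) i), fun i => ?_, ?_⟩
      · have h1 := PiLp.norm_apply_le (φ y - φ x) (Fin.castLE (by omega : k ≤ n) i)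
        rw [mem_preimage, mem_ball, dist_eq_norm] at hyb
        exact h1.trans hyb.le
      · simp only
        rw [embCoord_restrict (by omega) _ (hplane y ⟨hyE, hyU⟩).2, hψφ y hyU]
    · intro z hz
      have h1 : embCoord n k z ∈ φ '' (E ∩ U) := by
        rw [him]
        refine ⟨(hin z hz).1, fun i hi => ?_⟩
        simp [embCoord, not_lt.2 hi]
      obtain ⟨y, hy, hyz⟩ := h1
      rw [← hyz, hψφ y hy.2]
      exact hy.1
    · intro z z' hz hz' δ hδ hzz
      have h1 := hlip.norm_sub_le (hin z hz).2 (hin z' hz').2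
      have h2 := embCoord_dist n k z z' hδ hzz
      have h3 : (K : ℝ) * ‖embCoord n k z - embCoord n k z'‖ ≤ (K + 1) * ((n + 1) * δ) :=
        mul_le_mul (by linarith) h2 (norm_nonneg _) (by positivity)
      rw [mul_assoc]
      exact h1.trans h3

/-- **Proposition 1.1 (maximum principle).** Let `E` be a smooth closed `k`-dimensional
submanifold of ℝⁿ, `-1 ≤ k ≤ n-2` (with `E = ∅` for `k = -1`). If `u ∈ LSC(Ω̄ \ E)` is
bounded below on `Ω \ E` and satisfies `λ₁(∇²u) + ⋯ + λ_{k+2}(∇²u) ≤ 0` in `Ω \ E` in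
the viscosity sense, then `u ≥ inf_{∂Ω \ E} u` on `Ω \ E`. -/
theorem maximum_principle_outside_submanifold
    {n : ℕ} (hn : 2 ≤ n) (k : ℤ) (hk₁ : -1 ≤ k) (hk₂ : k ≤ (n : ℤ) - 2)
    (E : Set (En n))
    (hE : if k = -1 then E = ∅ else IsSmoothClosedSubmanifold k.toNat E)
    (Ω : Set (En n)) (hΩopen : IsOpen Ω) (hΩconn : IsConnected Ω)
    (hΩbdd : Bornology.IsBounded Ω)
    (u : En n → ℝ) (hu : LowerSemicontinuousOn u (closure Ω \ E))
    (hubd : BddBelow (u '' (Ω \ E)))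
    (hvisc : IsViscositySupersolution
      (fun _ _ _ M => sumSmallestEigs (k + 2).toNat M) (fun _ => 0) (Ω \ E) u) :
    ∀ m : ℝ, (∀ y ∈ frontier Ω \ E, m ≤ u y) → ∀ x ∈ Ω \ E, m ≤ u x := by
  refine main_of_polar (by omega) E Ω hΩopen hΩbdd u hu hubd hvisc ?_
  intro x₁ hx₁ R
  split_ifs at hE with h
  · subst h hE
    exact polar_empty (by norm_num) _ _
  · have e : (k + 2).toNat = k.toNat + 2 := by omega
    rw [e]
    exact polar_submanifold (by omega) E hE x₁ hx₁ R
end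
end

section
/- Let Ω ⊂ ℝⁿ be a bounded open set, let F(x,s,p,M) be continuous on Ω × ℝ × ℝⁿ × S^{n×n} with continuous partial derivatives in (s,p,M), and suppose there is a unit vector ξ ∈ ℝⁿ such that F_{M_ij}(x,s,p,M) ξ_i ξ_j > 0 for all values of the arguments, and that F_s(x,s,p,M) ≤ 0 for all values of the arguments. Let u ∈ LSC(Ω̄) with inf_Ω u > −∞ and v ∈ C²(Ω) ∩ C(Ω̄) satisfy F(x, u, ∇u, ∇²u) ≤ F(x, v, ∇v, ∇²v) in Ω in the viscosity sense, and u ≥ v on ∂Ω. Then u ≥ v in Ω. -/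
open Set Metric

noncomputable section

attribute [local instance] Matrix.normedAddCommGroup Matrix.normedSpace

lemma hasFDerivAt_expAux {n : ℕ} (ξ : En n) (α k : ℝ) (x : En n) :
    HasFDerivAt (fun y : En n => k * Real.exp (α * inner ℝ ξ y))
      ((k * α * Real.exp (α * inner ℝ ξ x)) • innerSL ℝ ξ) x := by
  have h1 : HasFDerivAt (fun y : En n => α * inner ℝ ξ y) (α • innerSL ℝ ξ) x :=
    ((innerSL ℝ ξ).hasFDerivAt (x := x)).const_mul α
  have h2 := (h1.exp).const_mul k
  have e : k • Real.exp (α * inner ℝ ξ x) • α • innerSL ℝ ξ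
      = (k * α * Real.exp (α * inner ℝ ξ x)) • innerSL ℝ ξ := by
    rw [smul_smul, smul_smul]
    congr 1
    ring
  rw [← e]
  exact h2

lemma fderiv_pert {n : ℕ} (ξ : En n) (α k c : ℝ) (v : En n → ℝ) (x : En n)
    (hv : DifferentiableAt ℝ v x) :
    fderiv ℝ (fun y => v y + (k * Real.exp (α * inner ℝ ξ y) + c)) x
      = fderiv ℝ v x + (k * α * Real.exp (α * inner ℝ ξ x)) • innerSL ℝ ξ :=
  (hv.hasFDerivAt.add ((hasFDerivAt_expAux ξ α k x).add_const c)).fderiv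

lemma gradient_pert {n : ℕ} (ξ : En n) (α k c : ℝ) (v : En n → ℝ) (x : En n)
    (hv : DifferentiableAt ℝ v x) :
    gradient (fun y => v y + (k * Real.exp (α * inner ℝ ξ y) + c)) x
      = gradient v x + (k * α * Real.exp (α * inner ℝ ξ x)) • ξ := by
  unfold gradient
  rw [fderiv_pert ξ α k c v x hv, map_add, map_smul]
  congr 2
  rw [LinearIsometryEquiv.symm_apply_eq]
  ext y
  simp

lemma hess_pert {n : ℕ} (ξ : En n) (α k c : ℝ) (v : En n → ℝ) (x : En n)
    (hv : ContDiffAt ℝ 2 v x) :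
    hess (fun y => v y + (k * Real.exp (α * inner ℝ ξ y) + c)) x
      = hess v x + (α * (k * α * Real.exp (α * inner ℝ ξ x))) •
          Matrix.of fun i j => ξ i * ξ j := by
  have hev : fderiv ℝ (fun y => v y + (k * Real.exp (α * inner ℝ ξ y) + c)) =ᶠ[nhds x]
      fun y => fderiv ℝ v y + (k * α * Real.exp (α * inner ℝ ξ y)) • innerSL ℝ ξ := by
    have := hv.eventually (by simp)
    filter_upwards [this] with y hy
    exact fderiv_pert ξ α k c v y (hy.differentiableAt (by simp))
  have hd : DifferentiableAt ℝ (fderiv ℝ v) x :=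
    (hv.fderiv_right (m := 1) (by norm_num)).differentiableAt (by simp)
  have h2 : fderiv ℝ (fderiv ℝ (fun y => v y + (k * Real.exp (α * inner ℝ ξ y) + c))) x
      = fderiv ℝ (fderiv ℝ v) x +
        ((k * α * α * Real.exp (α * inner ℝ ξ x)) • innerSL ℝ ξ).smulRight (innerSL ℝ ξ) := by
    rw [hev.fderiv_eq]
    exact (hd.hasFDerivAt.add ((hasFDerivAt_expAux ξ α (k * α) x).smul_const _)).fderiv
  ext i j
  simp only [hess, Matrix.of_apply, Matrix.add_apply, Matrix.smul_apply, iteratedFDeriv_two_apply,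
    h2]
  simp [EuclideanSpace.inner_single_right]
  ring

lemma continuousOn_gradient {n : ℕ} {v : En n → ℝ} {Ω : Set (En n)} (hΩ : IsOpen Ω)
    (hv : ContDiffOn ℝ 2 v Ω) : ContinuousOn (gradient v) Ω :=
  (LinearIsometryEquiv.continuous _).comp_continuousOn
    (hv.continuousOn_fderiv_of_isOpen hΩ (by norm_num))

lemma continuousOn_hess {n : ℕ} {v : En n → ℝ} {Ω : Set (En n)} (hΩ : IsOpen Ω)
    (hv : ContDiffOn ℝ 2 v Ω) : ContinuousOn (hess v) Ω := by
  have h : ContinuousOn (iteratedFDeriv ℝ 2 v) Ω :=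
    (hv.continuousOn_iteratedFDerivWithin (m := 2) (by norm_num) hΩ.uniqueDiffOn).congr
      fun x hx => (iteratedFDerivWithin_of_isOpen 2 hΩ hx).symm
  refine continuousOn_pi.2 fun i => continuousOn_pi.2 fun j => ?_
  exact ((ContinuousMultilinearMap.apply ℝ (fun _ : Fin 2 => En n) ℝ
    ![EuclideanSpace.single i 1, EuclideanSpace.single j 1]).continuous).comp_continuousOn h

/-- Strict monotonicity along the segment. -/
lemma seg_lt {n : ℕ} (G : ℝ × En n × Matrix (Fin n) (Fin n) ℝ → ℝ) (hG : ContDiff ℝ 1 G)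
    (s : ℝ) (p ξ : En n) (M Ξ : Matrix (Fin n) (Fin n) ℝ) (α a : ℝ) (ha : 0 < a)
    (ha1 : a ≤ 1) (hα : 0 < α) (hb1 : α * a ≤ 1)
    (h : ∀ c ∈ Icc (0 : ℝ) 1, ∀ d ∈ Icc (0 : ℝ) 1,
      0 < fderiv ℝ G (s, p + c • ξ, M + d • Ξ) (0, ξ, 0)
        + α * fderiv ℝ G (s, p + c • ξ, M + d • Ξ) (0, 0, Ξ)) :
    G (s, p, M) < G (s, p + a • ξ, M + (α * a) • Ξ) := by
  have hder : ∀ t : ℝ, HasDerivAt (fun t : ℝ => G (s, p + t • ξ, M + (α * t) • Ξ))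
      (fderiv ℝ G (s, p + t • ξ, M + (α * t) • Ξ) (0, ξ, α • Ξ)) t := by
    intro t
    have h1 : HasDerivAt (fun t : ℝ => p + t • ξ) ξ t := by
      simpa using ((hasDerivAt_id t).smul_const ξ).const_add p
    have h2 : HasDerivAt (fun t : ℝ => M + (α * t) • Ξ) (α • Ξ) t := by
      have h0 : HasDerivAt (fun t : ℝ => (α * t) • Ξ) (α • Ξ) t := by
        have h := ((hasDerivAt_id t).const_mul α).smul_const Ξ
        rw [mul_one] at h
        exact h
      exact h0.const_add M
    have h3 := (hasDerivAt_const t s).prodMk (h1.prodMk h2)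
    exact ((hG.differentiable (by simp)) _).hasFDerivAt.comp_hasDerivAt t h3
  have hmono := strictMonoOn_of_deriv_pos (convex_Icc (0 : ℝ) a)
    (f := fun t : ℝ => G (s, p + t • ξ, M + (α * t) • Ξ))
    (fun t _ => (hder t).continuousAt.continuousWithinAt) (by
      intro t ht
      rw [interior_Icc] at ht
      rw [(hder t).deriv]
      have := h t ⟨ht.1.le, ht.2.le.trans ha1⟩ (α * t) ⟨by have := ht.1; positivity, by
        nlinarith [ht.2]⟩
      have e : ((0 : ℝ), ξ, α • Ξ) = (0, ξ, 0) + α • ((0 : ℝ), (0 : En n), Ξ) := by simp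
      rw [e, map_add, map_smul]
      exact this)
  have := hmono (left_mem_Icc.2 ha.le) (right_mem_Icc.2 ha.le) ha
  simpa using this

/-- **Theorem 2.1 (maximum principle).** Suppose `F` is elliptic in some fixed unit
direction `ξ` and `F_s ≤ 0`. If `u` is an LSC, bounded-below viscosity supersolution of
`F(x,u,∇u,∇²u) ≤ F(x,v,∇v,∇²v)` in the bounded open set `Ω`, with `v ∈ C²(Ω) ∩ C(Ω̄)`
and `u ≥ v` on `∂Ω`, then `u ≥ v` in `Ω`. -/
theorem viscosity_maximum_principle
    {n : ℕ} (Ω : Set (En n)) (hΩopen : IsOpen Ω) (hΩbdd : Bornology.IsBounded Ω)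
    (F : En n → ℝ → En n → Matrix (Fin n) (Fin n) ℝ → ℝ)
    (hFcont : ContinuousOn
      (fun q : En n × ℝ × En n × Matrix (Fin n) (Fin n) ℝ => F q.1 q.2.1 q.2.2.1 q.2.2.2)
      {q | q.1 ∈ Ω})
    (hFC1 : ∀ x ∈ Ω, ContDiff ℝ 1
      (fun r : ℝ × En n × Matrix (Fin n) (Fin n) ℝ => F x r.1 r.2.1 r.2.2))
    (hFderivCont : ContinuousOn
      (fun q : En n × ℝ × En n × Matrix (Fin n) (Fin n) ℝ =>
        fderiv ℝ (fun r : ℝ × En n × Matrix (Fin n) (Fin n) ℝ => F q.1 r.1 r.2.1 r.2.2) q.2)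
      {q | q.1 ∈ Ω})
    (ξ : En n) (hξ : ‖ξ‖ = 1)
    (hFell : ∀ x ∈ Ω, ∀ (s : ℝ) (p : En n) (M : Matrix (Fin n) (Fin n) ℝ),
      0 < deriv (fun τ : ℝ => F x s p (M + τ • Matrix.of fun i j => ξ i * ξ j)) 0)
    (hFs : ∀ x ∈ Ω, ∀ (s : ℝ) (p : En n) (M : Matrix (Fin n) (Fin n) ℝ),
      deriv (fun s' : ℝ => F x s' p M) s ≤ 0)
    (u : En n → ℝ) (hu : LowerSemicontinuousOn u (closure Ω))
    (hubd : BddBelow (u '' Ω))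
    (v : En n → ℝ) (hv : ContDiffOn ℝ 2 v Ω) (hvcont : ContinuousOn v (closure Ω))
    (hvisc : IsViscositySupersolution F
      (fun x => F x (v x) (gradient v x) (hess v x)) Ω u)
    (hbdry : ∀ x ∈ frontier Ω, v x ≤ u x) :
    ∀ x ∈ Ω, v x ≤ u x := by
  intro x0 hx0
  by_contra! hlt
  set Ξ : Matrix (Fin n) (Fin n) ℝ := Matrix.of fun i j => ξ i * ξ j with hΞ
  have hcomp : IsCompact (closure Ω) := hΩbdd.isCompact_closure
  obtain ⟨R, hR⟩ := hΩbdd.closure.exists_norm_le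
  have hinn : ∀ x ∈ closure Ω, inner ℝ ξ x ≤ R := fun x hx =>
    (real_inner_le_norm ξ x).trans (by rw [hξ, one_mul]; exact hR x hx)
  have hlsc : ∀ g : En n → ℝ, ContinuousOn g (closure Ω) →
      LowerSemicontinuousOn (fun x => u x + g x) (closure Ω) := fun g hg =>
    hu.add hg.lowerSemicontinuousOn
  set c : ℝ := v x0 - u x0 with hc
  have hcpos : 0 < c := by linarith
  set K : Set (En n) := closure Ω ∩ (fun x => u x + -v x) ⁻¹' Iic (-(c / 2)) with hK
  have hKc : IsCompact K := (hlsc _ hvcont.neg).isCompact_inter_preimage_Iic hcomp _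
  have hKΩ : K ⊆ Ω := by
    rintro x ⟨hx, hx2⟩
    by_contra hn
    have := hbdry x ⟨hx, by rwa [hΩopen.interior_eq]⟩
    simp only [mem_preimage, mem_Iic] at hx2
    linarith
  -- the derivative along the compact set
  set D : En n × ℝ × ℝ → (ℝ × En n × Matrix (Fin n) (Fin n) ℝ →L[ℝ] ℝ) := fun q =>
    fderiv ℝ (fun r : ℝ × En n × Matrix (Fin n) (Fin n) ℝ => F q.1 r.1 r.2.1 r.2.2)
      (v q.1, gradient v q.1 + q.2.1 • ξ, hess v q.1 + q.2.2 • Ξ) with hD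
  set C : Set (En n × ℝ × ℝ) := K ×ˢ (Icc (0 : ℝ) 1 ×ˢ Icc (0 : ℝ) 1) with hC
  have hCc : IsCompact C := hKc.prod (isCompact_Icc.prod isCompact_Icc)
  have hfst : MapsTo (fun q : En n × ℝ × ℝ => q.1) C Ω := fun q hq => hKΩ hq.1
  have hDc : ContinuousOn D C := by
    have hm : ContinuousOn (fun q : En n × ℝ × ℝ =>
        ((q.1, v q.1, gradient v q.1 + q.2.1 • ξ, hess v q.1 + q.2.2 • Ξ) :
          En n × ℝ × En n × Matrix (Fin n) (Fin n) ℝ)) C := by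
      refine continuousOn_fst.prodMk ((hv.continuousOn.comp continuousOn_fst hfst).prodMk
        (ContinuousOn.prodMk ?_ ?_))
      · exact ((continuousOn_gradient hΩopen hv).comp continuousOn_fst hfst).add
          (by fun_prop)
      · exact ((continuousOn_hess hΩopen hv).comp continuousOn_fst hfst).add
          (by fun_prop)
    exact hFderivCont.comp hm (fun q hq => hfst hq)
  have hpos : ∀ q ∈ C, 0 < D q (0, 0, Ξ) := by
    intro q hq
    have hx := hfst hq
    have h := hFell q.1 hx (v q.1) (gradient v q.1 + q.2.1 • ξ) (hess v q.1 + q.2.2 • Ξ)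
    have h2 : HasDerivAt (fun τ : ℝ => hess v q.1 + q.2.2 • Ξ + τ • Ξ) Ξ 0 := by
      have h0 : HasDerivAt (fun τ : ℝ => τ • Ξ) Ξ 0 := by
        have h := (hasDerivAt_id (0 : ℝ)).smul_const Ξ
        rw [one_smul] at h
        exact h
      exact h0.const_add _
    have h3 := (hasDerivAt_const (0 : ℝ) (v q.1)).prodMk
      ((hasDerivAt_const (0 : ℝ) (gradient v q.1 + q.2.1 • ξ)).prodMk h2)
    have hd := ((hFC1 q.1 hx).differentiable (by simp)
      (v q.1, gradient v q.1 + q.2.1 • ξ, hess v q.1 + q.2.2 • Ξ)).hasFDerivAt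
    have h4 := HasFDerivAt.comp_hasDerivAt_of_eq (0 : ℝ) hd h3 (by simp)
    have h5 := h4.deriv
    simp only [Function.comp_def] at h5
    rw [h5] at h
    exact h
  obtain ⟨B, hB⟩ := hCc.bddAbove_image (f := fun q => -(D q (0, ξ, 0)) / D q (0, 0, Ξ))
    (((hDc.clm_apply continuousOn_const).neg).div (hDc.clm_apply continuousOn_const)
      fun q hq => (hpos q hq).ne')
  set α : ℝ := max B 0 + 1 with hα
  have hαpos : 0 < α := by have := le_max_right B 0; linarith
  have hmain : ∀ q ∈ C, 0 < D q (0, ξ, 0) + α * D q (0, 0, Ξ) := by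
    intro q hq
    have h1 : -(D q (0, ξ, 0)) / D q (0, 0, Ξ) ≤ B := hB ⟨q, hq, rfl⟩
    have h2 : -(D q (0, ξ, 0)) / D q (0, 0, Ξ) < α := by
      have := le_max_left B 0
      linarith
    rw [div_lt_iff₀ (hpos q hq)] at h2
    linarith
  -- choice of the small parameter
  set E : ℝ := Real.exp (α * R) with hE
  have hEpos : 0 < E := Real.exp_pos _
  obtain ⟨ε, hε, hε1, hε2, hε3⟩ : ∃ ε > 0, ε * E ≤ c / 2 ∧ ε * α * E ≤ 1 ∧
      α * (ε * α * E) ≤ 1 := by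
    refine ⟨min (c / 2 / E) (min (1 / (α * E)) (1 / (α * α * E))), by positivity, ?_, ?_, ?_⟩
    · rw [← le_div_iff₀ hEpos]; exact min_le_left _ _
    · rw [mul_assoc, ← le_div_iff₀ (by positivity)]
      exact (min_le_right _ _).trans (min_le_left _ _)
    · have h : min (c / 2 / E) (min (1 / (α * E)) (1 / (α * α * E))) * (α * α * E) ≤ 1 := by
        rw [← le_div_iff₀ (by positivity)]
        exact (min_le_right _ _).trans (min_le_right _ _)
      linarith
  have hexp : ∀ x ∈ closure Ω, Real.exp (α * inner ℝ ξ x) ≤ E := fun x hx =>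
    Real.exp_le_exp.2 (mul_le_mul_of_nonneg_left (hinn x hx) hαpos.le)
  have hgc : ContinuousOn (fun x => -(v x + ε * Real.exp (α * inner ℝ ξ x))) (closure Ω) :=
    (hvcont.add (by fun_prop)).neg
  obtain ⟨y, hy, hymin⟩ := (hlsc _ hgc).exists_isMinOn ⟨x0, subset_closure hx0⟩ hcomp
  have hym : ∀ x ∈ closure Ω, u y + -(v y + ε * Real.exp (α * inner ℝ ξ y)) ≤
      u x + -(v x + ε * Real.exp (α * inner ℝ ξ x)) := fun x hx => hymin hx
  have hyK : u y + -v y ≤ -(c / 2) := by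
    have h1 := hym x0 (subset_closure hx0)
    have h2 : 0 < ε * Real.exp (α * inner ℝ ξ x0) := by positivity
    have h3 := mul_le_mul_of_nonneg_left (hexp y hy) hε.le
    linarith
  have hyK' : y ∈ K := ⟨hy, hyK⟩
  have hyΩ : y ∈ Ω := hKΩ hyK'
  set m : ℝ := u y - v y - ε * Real.exp (α * inner ℝ ξ y) with hm
  have hvy : ContDiffAt ℝ 2 v y := hv.contDiffAt (hΩopen.mem_nhds hyΩ)
  have hφ : ContDiffOn ℝ 2 (fun x => v x + (ε * Real.exp (α * inner ℝ ξ x) + m)) Ω := by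
    refine hv.add (ContDiff.contDiffOn ?_)
    have hi : ContDiff ℝ 2 (fun x : En n => inner ℝ ξ x) := (innerSL ℝ ξ).contDiff
    exact (contDiff_const.mul (contDiff_const.mul hi).exp).add contDiff_const
  have hv1 := hvisc _ hφ y hyΩ (by simp only [hm]; ring) (by
    refine IsMinOn.localize ?_
    intro x hx
    have := hym x (subset_closure hx)
    simp only [mem_ofPred_eq]
    linarith)
  rw [gradient_pert ξ α ε m v y (hvy.differentiableAt (by simp)),
    hess_pert ξ α ε m v y hvy] at hv1
  set a : ℝ := ε * α * Real.exp (α * inner ℝ ξ y) with ha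
  have hapos : 0 < a := by positivity
  have haE : a ≤ ε * α * E := mul_le_mul_of_nonneg_left (hexp y hy) (by positivity)
  have hlt2 := seg_lt (fun r : ℝ × En n × Matrix (Fin n) (Fin n) ℝ => F y r.1 r.2.1 r.2.2)
    (hFC1 y hyΩ) (v y) (gradient v y) ξ (hess v y) Ξ α a hapos (haE.trans hε2) hαpos
    ((mul_le_mul_of_nonneg_left haE hαpos.le).trans hε3)
    (fun c' hc' d hd => hmain (y, c', d) ⟨hyK', hc', hd⟩)
  have hanti : Antitone (fun s : ℝ => F y s (gradient v y + a • ξ) (hess v y + (α * a) • Ξ)) := by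
    refine antitone_of_deriv_nonpos ?_ (fun s => hFs y hyΩ s _ _)
    intro s
    exact ((hFC1 y hyΩ).differentiable (by simp) _).comp s
      (f := fun s : ℝ => (s, gradient v y + a • ξ, hess v y + (α * a) • Ξ)) (by fun_prop)
  have hle : v y + (ε * Real.exp (α * inner ℝ ξ y) + m) ≤ v y := by
    simp only [hm]; linarith
  have := hanti hle
  simp only at this hlt2 hv1
  linarith
end
end
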